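/- There exist absolute constants c₀, c > 0 with the following property. Let a ≥ b ≥ 0, A ≥ B ≥ 1, 0 < p < ∞ be real numbers with 2b ≥ pB + p/2 and 2a+2 < pA + p/2, and let n be an integer with n ≥ c₀ · A · ((2a+2)/(p(A+1/2)−2a−2))^{1/p}. Then ∫_{−1}^1 |p_n^{(A,B)}(x)/p_n^{(A,B)}(1)|^p (1−x)^a (1+x)^b dx ≤ c · (2^{a+b}/(2a+2)) · { A^{1/6} / (2^{(A+B−1)/2} p_n^{(A,B)}(1)) }^{(2a+2)/(A+1/2)} · { (2a+2)/(p(A+1/2)−2a−2) }^{(2a+2)/(p(A+1/2))}. -/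

import Mathlib

noncomputable section

open MeasureTheory Real Set
open scoped RealInnerProductSpace

/-- Value at `x` of the orthonormalized Jacobi polynomial `p_n^{(α,β)}`. -/
def jacobiP (α β : ℝ) (n : ℕ) (x : ℝ) : ℝ :=
  Real.sqrt ((2 * (n : ℝ) + α + β + 1) / 2 ^ (α + β + 1) *
      (Real.Gamma ((n : ℝ) + α + β + 1) * (n.factorial : ℝ) /
        (Real.Gamma ((n : ℝ) + α + 1) * Real.Gamma ((n : ℝ) + β + 1)))) *
    (Real.Gamma (α + n + 1) / ((n.factorial : ℝ) * Real.Gamma (α + β + n + 1))) *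
    ∑ m ∈ Finset.range (n + 1),
      (n.choose m : ℝ) * (Real.Gamma (α + β + n + m + 1) / Real.Gamma (α + m + 1)) *
        ((x - 1) / 2) ^ m

/-- The kernel `K_n^{(α,β)}(x) = Σ_{ℓ<n} p_ℓ^{(α,β)}(1) p_ℓ^{(α,β)}(x)`. -/
def jacobiK (α β : ℝ) (n : ℕ) (x : ℝ) : ℝ :=
  ∑ ℓ ∈ Finset.range n, jacobiP α β ℓ 1 * jacobiP α β ℓ x

/-- The unit sphere `S^d ⊂ ℝ^{d+1}`. -/
abbrev Sph (d : ℕ) := Metric.sphere (0 : EuclideanSpace ℝ (Fin (d + 1))) 1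

/-- The rotation invariant Riemannian volume probability measure `μ_d^*` on `S^d`. -/
def sphMeasure (d : ℕ) : Measure (Sph d) :=
  ((volume : Measure (EuclideanSpace ℝ (Fin (d + 1)))).toSphere Set.univ)⁻¹ •
    (volume : Measure (EuclideanSpace ℝ (Fin (d + 1)))).toSphere

/-- `f : S^d → ℝ` is the restriction to the sphere of an algebraic polynomial in `d+1`
variables of total degree `< n`, i.e. `f ∈ Π_n^d`. -/
def IsSphPoly (d : ℕ) (n : ℝ) (f : Sph d → ℝ) : Prop :=
  ∃ p : MvPolynomial (Fin (d + 1)) ℝ, (p.totalDegree : ℝ) < n ∧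
    ∀ y : Sph d, f y = MvPolynomial.eval (fun i => (y : EuclideanSpace ℝ (Fin (d + 1))) i) p

/-- Integral of `f` with respect to a signed measure (via the Jordan decomposition). -/
def sInt {X : Type*} [MeasurableSpace X] (ν : SignedMeasure X) (f : X → ℝ) : ℝ :=
  (∫ x, f x ∂ν.toJordanDecomposition.posPart) - ∫ x, f x ∂ν.toJordanDecomposition.negPart

/-- Integral of `f` over a set `s` with respect to a signed measure. -/
def sIntOn {X : Type*} [MeasurableSpace X] (ν : SignedMeasure X) (s : Set X) (f : X → ℝ) : ℝ :=
  (∫ x in s, f x ∂ν.toJordanDecomposition.posPart) -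
    ∫ x in s, f x ∂ν.toJordanDecomposition.negPart

/-- `ν` is a quadrature measure of order `n` on `S^d`. -/
def IsQuadrature (d : ℕ) (n : ℝ) (ν : SignedMeasure (Sph d)) : Prop :=
  ∀ f : Sph d → ℝ, IsSphPoly d n f → sInt ν f = ∫ y, f y ∂sphMeasure d

/-- `ν` satisfies the Marcinkiewicz-Zygmund inequality of order `n` with constant `c`;
`ν ∈ MZ(d;n)` means this holds for some `c`, and `|||ν|||_{d;n}` is the least such `c`. -/
def IsMZ (d : ℕ) (n : ℝ) (ν : SignedMeasure (Sph d)) (c : ℝ) : Prop :=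
  ∀ f : Sph d → ℝ, IsSphPoly d (n / 2) f →
    (∫ y, (f y) ^ 2 ∂ν.totalVariation) ≤ c * ∫ y, (f y) ^ 2 ∂sphMeasure d

/-- `ω_d`, the volume of `S^d`. -/
def omegaS (d : ℕ) : ℝ := 2 * Real.pi ^ (((d : ℝ) + 1) / 2) / Real.Gamma (((d : ℝ) + 1) / 2)

/-- The reproducing kernel `K_{d;n}` of `Π_n^d`. -/
def sphK (d n : ℕ) (x : ℝ) : ℝ :=
  (omegaS d / omegaS (d - 1)) * jacobiK ((d : ℝ) / 2 - 1) ((d : ℝ) / 2 - 1) n x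

/-- The kernel `Φ̃_{d;n,r}`. -/
def PhiTilde (d n : ℕ) (r : ℝ) (x : ℝ) : ℝ :=
  sphK d ((d + 2) * n) x *
    (jacobiP ((d : ℝ) / 2 + r) ((d : ℝ) / 2 - 2) (d * n) x /
      jacobiP ((d : ℝ) / 2 + r) ((d : ℝ) / 2 - 2) (d * n) 1)

/-- The kernel `Φ_{d;n,r}`. -/
def Phi (d n : ℕ) (r : ℝ) (x : ℝ) : ℝ := PhiTilde d n r x * ((1 + x) / 2) ^ n

/-- The inner product `x·y` of two points of `S^d`. -/
def ip {d : ℕ} (x y : Sph d) : ℝ :=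
  ⟪(x : EuclideanSpace ℝ (Fin (d + 1))), (y : EuclideanSpace ℝ (Fin (d + 1)))⟫

/-- The operator `σ_{d;n,r}(ν, f)`. -/
def sigmaOp (d n : ℕ) (r : ℝ) (ν : SignedMeasure (Sph d)) (f : Sph d → ℝ) (x : Sph d) : ℝ :=
  sInt ν (fun y => f y * Phi d n r (ip x y))

/-- The operator `σ̃_{d;n,r}(ν, f)`. -/
def sigmaTildeOp (d n : ℕ) (r : ℝ) (ν : SignedMeasure (Sph d)) (f : Sph d → ℝ) (x : Sph d) : ℝ :=
  sInt ν (fun y => f y * PhiTilde d n r (ip x y))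

/-- The uniform (supremum) norm `‖f‖_∞`. -/
def supNorm {X : Type*} (f : X → ℝ) : ℝ := sSup (Set.range fun x => |f x|)

/-- `E_{d;n}(f)`, the degree of approximation of `f` from `Π_n^d` in the uniform norm. -/
def bestApprox (d : ℕ) (n : ℝ) (f : Sph d → ℝ) : ℝ :=
  sInf {t | ∃ g, IsSphPoly d n g ∧ ∀ y, |f y - g y| ≤ t}

/-- `dim Π_n^d = (2n+d−2)·Γ(n+d−1)/(Γ(n)·Γ(d+1))` (for `n ≥ 2`). -/
def dimPi (d n : ℕ) : ℝ :=
  (2 * (n : ℝ) + d - 2) * Real.Gamma ((n : ℝ) + d - 1) /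
    (Real.Gamma n * Real.Gamma ((d : ℝ) + 1))

/-!
In the variable `θ = arccos x`, the function
`v = (1 - cos θ)^{A/2+1/4} (1 + cos θ)^{B/2+1/4} p_n^{(A,B)}(cos θ)` solves `v'' = -Q v` on
`(0, π)`, where, with `N = n + (A + B + 1) / 2`, the potential
`Q = N² - (A² - 1/4) / (4 sin² (θ/2)) - (B² - 1/4) / (4 cos² (θ/2))` is concave. For every such
oscillator the energy `v'² / √Q + √Q v²`, with a correction by the adiabaticity `Q' / (2 Q^{3/2})`,
stays constant up to a bounded factor between the two transition points, where the adiabaticity is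
`±1/2`. If `√Q ≥ ρ` at these points, then the maximum of `v²` is at most a multiple of energy over
`ρ`, and the energy is controlled by its average over any interval of many oscillations, hence by
`∫ v² = 1`. This gives `v² ≤ 4 A^{1/3} X²` as soon as `10^12 A ≤ n X` and `X ≥ 1`.

Put `x = 1 - 2u`, `T = A^{1/6} / (2^{(A+B-1)/2} p_n^{(A,B)}(1))` and
`R = (2a+2) / (p(A+1/2)-2a-2)`. The bound on `v` turns into
`|p_n(x) / p_n(1)| ≤ min (1, X T u^{-(A+1/2)/2})`, up to a power of `1 - u` that is absorbed by
`(1+x)^b`. Integrating against `u^a` and cutting at the crossover gives `(X T)^{pt} (1 + R) / (a+1)`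
with `t = R / (1 + R)`. Since the binary entropy of `t` is at most `log 2`, one has `1 + R ≤ 2 R^t`,
and, for `X = max (1, R^{-1/p})`, also `X^{pt} ≤ 2`.
-/

lemma monotoneOn_Icc_of_hasDerivAt {f f' : ℝ → ℝ} {x y : ℝ}
    (hf : ∀ t ∈ Icc x y, HasDerivAt f (f' t) t) (hf' : ∀ t ∈ Icc x y, 0 ≤ f' t) :
    MonotoneOn f (Icc x y) :=
  monotoneOn_of_hasDerivWithinAt_nonneg (convex_Icc x y)
    (fun t ht => (hf t ht).continuousAt.continuousWithinAt)
    (fun t ht => (hf t (interior_subset ht)).hasDerivWithinAt)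
    fun t ht => hf' t (interior_subset ht)

lemma antitoneOn_Icc_of_hasDerivAt {f f' : ℝ → ℝ} {x y : ℝ}
    (hf : ∀ t ∈ Icc x y, HasDerivAt f (f' t) t) (hf' : ∀ t ∈ Icc x y, f' t ≤ 0) :
    AntitoneOn f (Icc x y) :=
  antitoneOn_of_hasDerivWithinAt_nonpos (convex_Icc x y)
    (fun t ht => (hf t ht).continuousAt.continuousWithinAt)
    (fun t ht => (hf t (interior_subset ht)).hasDerivWithinAt)
    fun t ht => hf' t (interior_subset ht)

/-! ### Jacobi polynomials -/

section JacobiPolynomial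

open Polynomial

/-- The coefficients of `P_n^{(α,β)}` in powers of `(x - 1) / 2`, up to a positive factor that
does not depend on `m`. -/
def jacobiCoeff (α β : ℝ) (n m : ℕ) : ℝ :=
  n.choose m * (Gamma (α + β + n + m + 1) / Gamma (α + m + 1))

/-- The Jacobi polynomial `P_n^{(α,β)}`, up to a positive factor, in the variable
`(x - 1) / 2`. -/
def jacobiShifted (α β : ℝ) (n : ℕ) : ℝ[X] :=
  ∑ m ∈ Finset.range (n + 1), C (jacobiCoeff α β n m) * X ^ m

/-- The Jacobi polynomial `P_n^{(α,β)}`, up to a positive factor chosen to keep Gamma functions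
out of its differential equation. -/
def jacobiPoly (α β : ℝ) (n : ℕ) : ℝ[X] :=
  (jacobiShifted α β n).comp (C 2⁻¹ * (X - 1))

/-- The positive factor that turns `jacobiPoly` into the orthonormal polynomial `jacobiP`. -/
def jacobiNormalization (α β : ℝ) (n : ℕ) : ℝ :=
  √((2 * n + α + β + 1) / 2 ^ (α + β + 1) *
      (Gamma (n + α + β + 1) * n.factorial / (Gamma (n + α + 1) * Gamma (n + β + 1)))) *
    (Gamma (α + n + 1) / (n.factorial * Gamma (α + β + n + 1)))

variable {α β : ℝ}

lemma coeff_jacobiShifted (α β : ℝ) (n m : ℕ) :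
    (jacobiShifted α β n).coeff m = jacobiCoeff α β n m := by
  simp only [jacobiShifted, finsetSum_coeff, coeff_C_mul, coeff_X_pow, mul_ite, mul_one, mul_zero,
    Finset.sum_ite_eq, Finset.mem_range, ite_eq_left_iff, not_lt]
  intro hnm
  simp [jacobiCoeff, Nat.choose_eq_zero_of_lt (Nat.lt_of_succ_le hnm)]

lemma jacobiP_eq_normalization_mul (α β : ℝ) (n : ℕ) (x : ℝ) :
    jacobiP α β n x = jacobiNormalization α β n * (jacobiPoly α β n).eval x := by
  have hx : (2 : ℝ)⁻¹ * (x - 1) = (x - 1) / 2 := by ring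
  simp [jacobiP, jacobiNormalization, jacobiPoly, jacobiShifted, jacobiCoeff, eval_finsetSum, hx]

lemma choose_succ_mul_cast (n m : ℕ) :
    (n.choose (m + 1) : ℝ) * (m + 1) = n.choose m * ((n : ℝ) - m) := by
  rcases le_or_gt m n with h | h
  · have := Nat.choose_succ_right_eq n m
    rw [← Nat.cast_sub h]
    exact_mod_cast this
  · simp [Nat.choose_eq_zero_of_lt h, Nat.choose_eq_zero_of_lt (h.trans m.lt_succ_self)]

lemma jacobiCoeff_succ (hα : 0 ≤ α) (hβ : 0 ≤ β) (n m : ℕ) :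
    ((m : ℝ) + 1) * (m + α + 1) * jacobiCoeff α β n (m + 1) =
      ((n : ℝ) - m) * (n + m + α + β + 1) * jacobiCoeff α β n m := by
  have hnum : Gamma (α + β + n + (m + 1 : ℕ) + 1) =
      (α + β + n + m + 1) * Gamma (α + β + n + m + 1) := by
    rw [← Gamma_add_one (by positivity)]
    push_cast
    ring_nf
  have hden : Gamma (α + (m + 1 : ℕ) + 1) = (α + m + 1) * Gamma (α + m + 1) := by
    rw [← Gamma_add_one (by positivity)]
    push_cast
    ring_nf
  rw [jacobiCoeff, jacobiCoeff, hnum, hden]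
  field_simp
  linear_combination (m + α + 1) * (α + β + n + m + 1) * choose_succ_mul_cast n m

lemma jacobiShifted_ode (hα : 0 ≤ α) (hβ : 0 ≤ β) (n : ℕ) :
    X * derivative (derivative (jacobiShifted α β n)) +
        X * (X * derivative (derivative (jacobiShifted α β n))) +
        C (α + 1) * derivative (jacobiShifted α β n) +
        C (α + β + 2) * (X * derivative (jacobiShifted α β n)) =
      C ((n : ℝ) * (n + α + β + 1)) * jacobiShifted α β n := by
  ext m
  have hrec := jacobiCoeff_succ hα hβ n m
  rcases m with _ | _ | m <;>
  · simp only [coeff_add, coeff_C_mul, coeff_X_mul, coeff_X_mul_zero, coeff_derivative,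
      coeff_jacobiShifted]
    push_cast at hrec ⊢
    linear_combination hrec

lemma jacobiPoly_ode (hα : 0 ≤ α) (hβ : 0 ≤ β) (n : ℕ) (x : ℝ) :
    (1 - x ^ 2) * (jacobiPoly α β n).derivative.derivative.eval x +
        (β - α - (α + β + 2) * x) * (jacobiPoly α β n).derivative.eval x +
        n * (n + α + β + 1) * (jacobiPoly α β n).eval x = 0 := by
  have h := congrArg (eval (2⁻¹ * (x - 1))) (jacobiShifted_ode hα hβ n)
  simp only [eval_add, eval_mul, eval_X, eval_C] at h
  simp only [jacobiPoly, derivative_comp, derivative_mul, derivative_C, derivative_sub,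
    derivative_X, derivative_one, zero_mul, zero_add, sub_zero, mul_one, eval_mul, eval_C,
    eval_comp, eval_sub, eval_X, eval_one]
  linear_combination -h

lemma derivative_jacobiPoly_succ (α β : ℝ) (n : ℕ) :
    (jacobiPoly α β (n + 1)).derivative =
      C (((n : ℝ) + 1) / 2) * jacobiPoly (α + 1) (β + 1) n := by
  have hshifted : (jacobiShifted α β (n + 1)).derivative =
      C ((n : ℝ) + 1) * jacobiShifted (α + 1) (β + 1) n := by
    ext m
    have hchoose : ((n + 1).choose (m + 1) : ℝ) * (m + 1) = (n + 1) * n.choose m := by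
      exact_mod_cast (Nat.add_one_mul_choose_eq n m).symm
    have hnum : α + β + (n + 1 : ℕ) + (m + 1 : ℕ) + 1 = α + 1 + (β + 1) + n + m + 1 := by
      push_cast; ring
    have hden : α + (m + 1 : ℕ) + 1 = α + 1 + m + 1 := by push_cast; ring
    rw [coeff_derivative, coeff_C_mul, coeff_jacobiShifted, coeff_jacobiShifted, jacobiCoeff,
      jacobiCoeff, hnum, hden]
    linear_combination (Gamma (α + 1 + (β + 1) + n + m + 1) / Gamma (α + 1 + m + 1)) * hchoose
  rw [jacobiPoly, derivative_comp, hshifted, jacobiPoly, mul_comp, C_comp, div_eq_mul_inv, C_mul]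
  simp only [derivative_mul, derivative_C, derivative_sub, derivative_X, derivative_one, zero_mul,
    zero_add, sub_zero, mul_one]
  ring

lemma jacobiNormalization_pos (hα : 0 ≤ α) (hβ : 0 ≤ β) (n : ℕ) :
    0 < jacobiNormalization α β n := by
  unfold jacobiNormalization
  positivity

lemma jacobiNormalization_sq (hα : 0 ≤ α) (hβ : 0 ≤ β) (n : ℕ) :
    jacobiNormalization α β n ^ 2 = (2 * n + α + β + 1) / 2 ^ (α + β + 1) *
      (Gamma (n + α + 1) / (n.factorial * Gamma (n + β + 1) * Gamma (n + α + β + 1))) := by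
  rw [jacobiNormalization, show α + n + 1 = n + α + 1 by ring,
    show α + β + n + 1 = n + α + β + 1 by ring, mul_pow, sq_sqrt (by positivity)]
  field_simp

lemma jacobiNormalization_succ_sq (hα : 0 ≤ α) (hβ : 0 ≤ β) (n : ℕ) :
    jacobiNormalization α β (n + 1) ^ 2 * (n + 1) =
      4 * (n + α + β + 2) * jacobiNormalization (α + 1) (β + 1) n ^ 2 := by
  rw [jacobiNormalization_sq hα hβ, jacobiNormalization_sq (by linarith) (by linarith)]
  have hΓ : Gamma ((n : ℝ) + (α + 1) + (β + 1) + 1) =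
      (n + α + β + 2) * Gamma (((n + 1 : ℕ) : ℝ) + α + β + 1) := by
    have h : ((n + 1 : ℕ) : ℝ) + α + β + 1 = n + α + β + 2 := by push_cast; ring
    rw [h, ← Gamma_add_one (by positivity)]
    ring_nf
  have h₃ : 0 < Gamma (((n + 1 : ℕ) : ℝ) + α + β + 1) := Gamma_pos_of_pos (by positivity)
  have hpow : (2 : ℝ) ^ (α + 1 + (β + 1) + 1) = 4 * 2 ^ (α + β + 1) := by
    rw [show α + 1 + (β + 1) + 1 = α + β + 1 + 2 by ring, rpow_add two_pos]
    norm_num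
    ring
  rw [show ((n + 1 : ℕ) : ℝ) + α + 1 = n + (α + 1) + 1 by push_cast; ring,
    show ((n + 1 : ℕ) : ℝ) + β + 1 = n + (β + 1) + 1 by push_cast; ring, hΓ, hpow,
    Nat.factorial_succ]
  push_cast at h₃ ⊢
  field_simp
  ring

/-- The Jacobi weight. -/
def jacobiWeight (α β x : ℝ) : ℝ := (1 - x) ^ α * (1 + x) ^ β

lemma continuous_jacobiWeight (hα : 0 ≤ α) (hβ : 0 ≤ β) : Continuous (jacobiWeight α β) :=
  ((continuous_const.sub continuous_id).rpow_const fun _ => Or.inr hα).mul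
    ((continuous_const.add continuous_id).rpow_const fun _ => Or.inr hβ)

lemma integral_rpow_mul_one_sub_rpow (hα : 0 ≤ α) (hβ : 0 ≤ β) :
    ∫ t in (0 : ℝ)..1, t ^ α * (1 - t) ^ β =
      Gamma (α + 1) * Gamma (β + 1) / Gamma (α + β + 2) := by
  have hcast : ∫ t in (0 : ℝ)..1, (t : ℂ) ^ (((α + 1 : ℝ) : ℂ) - 1) *
        (1 - (t : ℂ)) ^ (((β + 1 : ℝ) : ℂ) - 1) =
      ∫ t in (0 : ℝ)..1, ((t ^ α * (1 - t) ^ β : ℝ) : ℂ) := by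
    refine intervalIntegral.integral_congr fun t ht => ?_
    rw [uIcc_of_le zero_le_one] at ht
    rw [Complex.ofReal_mul, Complex.ofReal_cpow ht.1, Complex.ofReal_cpow (sub_nonneg.2 ht.2)]
    push_cast
    simp
  have h := Complex.betaIntegral_eq_Gamma_mul_div ((α + 1 : ℝ) : ℂ) ((β + 1 : ℝ) : ℂ)
    (by simp; linarith) (by simp; linarith)
  rw [Complex.betaIntegral, hcast, intervalIntegral.integral_ofReal, ← Complex.ofReal_add,
    Complex.Gamma_ofReal, Complex.Gamma_ofReal, Complex.Gamma_ofReal,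
    show α + 1 + (β + 1) = α + β + 2 by ring] at h
  exact_mod_cast h

lemma integral_jacobiWeight (hα : 0 ≤ α) (hβ : 0 ≤ β) :
    ∫ x in (-1 : ℝ)..1, jacobiWeight α β x =
      2 ^ (α + β + 1) * (Gamma (α + 1) * Gamma (β + 1) / Gamma (α + β + 2)) := by
  have hsubst := intervalIntegral.integral_comp_sub_div (a := -1) (b := 1)
    (fun t : ℝ => t ^ α * (1 - t) ^ β) two_ne_zero (1 / 2)
  norm_num at hsubst
  have hweight : ∫ x in (-1 : ℝ)..1, jacobiWeight α β x =
      ∫ x in (-1 : ℝ)..1, 2 ^ (α + β) * ((1 / 2 - x / 2) ^ α * (1 - (1 / 2 - x / 2)) ^ β) := by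
    refine intervalIntegral.integral_congr fun x hx => ?_
    rw [uIcc_of_le (by norm_num)] at hx
    simp only [jacobiWeight]
    rw [show 1 - x = 2 * (1 / 2 - x / 2) by ring, show 1 + x = 2 * (1 - (1 / 2 - x / 2)) by ring,
      mul_rpow two_pos.le (by linarith [hx.2]), mul_rpow two_pos.le (by linarith [hx.1]),
      rpow_add two_pos]
    ring
  rw [hweight, intervalIntegral.integral_const_mul, hsubst, integral_rpow_mul_one_sub_rpow hα hβ,
    rpow_add_one two_ne_zero]
  ring

lemma hasDerivAt_jacobiWeight_succ (α β : ℝ) {x : ℝ} (hx₁ : -1 < x) (hx₂ : x < 1) :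
    HasDerivAt (jacobiWeight (α + 1) (β + 1))
      ((β - α - (α + β + 2) * x) * jacobiWeight α β x) x := by
  have h₁ : 1 - x ≠ 0 := by linarith
  have h₂ : 1 + x ≠ 0 := by linarith
  have d₁ := ((hasDerivAt_id x).const_sub 1).rpow_const (p := α + 1) (Or.inl h₁)
  have d₂ := ((hasDerivAt_id x).const_add 1).rpow_const (p := β + 1) (Or.inl h₂)
  refine (d₁.mul d₂).congr_deriv ?_
  simp only [id, add_sub_cancel_right, rpow_add_one h₁, rpow_add_one h₂, jacobiWeight]
  ring

lemma jacobiWeight_succ (α β : ℝ) {x : ℝ} (hx₁ : -1 < x) (hx₂ : x < 1) :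
    jacobiWeight (α + 1) (β + 1) x = (1 - x ^ 2) * jacobiWeight α β x := by
  rw [jacobiWeight, rpow_add_one (by linarith), rpow_add_one (by linarith), jacobiWeight]
  ring

lemma integral_sq_derivative_jacobiPoly (hα : 0 ≤ α) (hβ : 0 ≤ β) (n : ℕ) :
    ∫ x in (-1 : ℝ)..1, (jacobiPoly α β n).derivative.eval x ^ 2 *
        jacobiWeight (α + 1) (β + 1) x =
      n * (n + α + β + 1) *
        ∫ x in (-1 : ℝ)..1, (jacobiPoly α β n).eval x ^ 2 * jacobiWeight α β x := by
  set P := jacobiPoly α β n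
  have hw := continuous_jacobiWeight hα hβ
  have hw' := continuous_jacobiWeight (add_nonneg hα zero_le_one) (add_nonneg hβ zero_le_one)
  have c₁ : Continuous fun x => P.derivative.eval x ^ 2 * jacobiWeight (α + 1) (β + 1) x :=
    (P.derivative.continuous.pow 2).mul hw'
  have c₂ : Continuous fun x => (n * (n + α + β + 1)) * (P.eval x ^ 2 * jacobiWeight α β x) :=
    continuous_const.mul ((P.continuous.pow 2).mul hw)
  have hFTC : ∫ x in (-1 : ℝ)..1, (P.derivative.eval x ^ 2 * jacobiWeight (α + 1) (β + 1) x -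
      (n * (n + α + β + 1)) * (P.eval x ^ 2 * jacobiWeight α β x)) =
      P.eval 1 * P.derivative.eval 1 * jacobiWeight (α + 1) (β + 1) 1 -
      P.eval (-1) * P.derivative.eval (-1) * jacobiWeight (α + 1) (β + 1) (-1) := by
    refine intervalIntegral.integral_eq_sub_of_hasDerivAt_of_le
      (f := fun x => P.eval x * P.derivative.eval x * jacobiWeight (α + 1) (β + 1) x) (by norm_num)
      ((P.continuous.mul P.derivative.continuous).mul hw').continuousOn (fun x hx => ?_)
      ((c₁.sub c₂).intervalIntegrable _ _)
    refine (((P.hasDerivAt x).mul (P.derivative.hasDerivAt x)).mul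
      (hasDerivAt_jacobiWeight_succ α β hx.1 hx.2)).congr_deriv ?_
    simp only [Pi.mul_apply, jacobiWeight_succ α β hx.1 hx.2]
    linear_combination (P.eval x * jacobiWeight α β x) * jacobiPoly_ode hα hβ n x
  have hα₁ : α + 1 ≠ 0 := by positivity
  have hβ₁ : β + 1 ≠ 0 := by positivity
  rw [intervalIntegral.integral_sub (c₁.intervalIntegrable _ _) (c₂.intervalIntegrable _ _),
    intervalIntegral.integral_const_mul] at hFTC
  simp only [jacobiWeight, sub_self, zero_rpow hα₁, add_neg_cancel, zero_rpow hβ₁, zero_mul,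
    mul_zero, sub_eq_zero] at hFTC ⊢
  exact hFTC

theorem jacobiNormalization_sq_mul_integral (n : ℕ) : ∀ {α β : ℝ}, 0 ≤ α → 0 ≤ β →
    jacobiNormalization α β n ^ 2 *
      ∫ x in (-1 : ℝ)..1, (jacobiPoly α β n).eval x ^ 2 * jacobiWeight α β x = 1 := by
  induction n with
  | zero =>
    intro α β hα hβ
    have hP (x : ℝ) : (jacobiPoly α β 0).eval x = Gamma (α + β + 1) / Gamma (α + 1) := by
      simp [jacobiPoly, jacobiShifted, jacobiCoeff]
    have hΓ : Gamma (α + β + 2) = (α + β + 1) * Gamma (α + β + 1) := by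
      rw [← Gamma_add_one (by positivity)]
      ring_nf
    simp only [hP]
    rw [intervalIntegral.integral_const_mul, integral_jacobiWeight hα hβ,
      jacobiNormalization_sq hα hβ, hΓ]
    simp only [Nat.cast_zero, mul_zero, zero_add, Nat.factorial_zero, Nat.cast_one, one_mul]
    field_simp
  | succ n ih =>
    intro α β hα hβ
    have hih := ih (add_nonneg hα zero_le_one) (add_nonneg hβ zero_le_one)
    have hstep := integral_sq_derivative_jacobiPoly hα hβ (n + 1)
    simp only [derivative_jacobiPoly_succ, eval_mul, eval_C, mul_pow, mul_assoc] at hstep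
    rw [intervalIntegral.integral_const_mul] at hstep
    set I := ∫ x in (-1 : ℝ)..1, (jacobiPoly α β (n + 1)).eval x ^ 2 * jacobiWeight α β x
    set J := ∫ x in (-1 : ℝ)..1,
      (jacobiPoly (α + 1) (β + 1) n).eval x ^ 2 * jacobiWeight (α + 1) (β + 1) x
    push_cast at hstep
    have hIJ : ((n : ℝ) + 1) * J = 4 * (n + α + β + 2) * I := by
      have hn : (n : ℝ) + 1 ≠ 0 := by positivity
      apply mul_left_cancel₀ hn
      linear_combination 4 * hstep
    have hpos : 4 * ((n : ℝ) + α + β + 2) ≠ 0 := by positivity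
    apply mul_right_cancel₀ hpos
    linear_combination (-jacobiNormalization α β (n + 1) ^ 2) * hIJ +
      J * jacobiNormalization_succ_sq hα hβ n + 4 * (n + α + β + 2) * hih

lemma eval_one_jacobiPoly_pos (hα : 0 ≤ α) (hβ : 0 ≤ β) (n : ℕ) :
    0 < (jacobiPoly α β n).eval 1 := by
  have h : (jacobiPoly α β n).eval 1 = Gamma (α + β + n + 1) / Gamma (α + 1) := by
    rw [jacobiPoly, eval_comp]
    simp only [eval_mul, eval_C, eval_sub, eval_X, eval_one, sub_self, mul_zero]
    rw [← coeff_zero_eq_eval_zero, coeff_jacobiShifted]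
    simp [jacobiCoeff]
  rw [h]
  exact div_pos (Gamma_pos_of_pos (by positivity)) (Gamma_pos_of_pos (by positivity))

lemma abs_eval_neg_one_jacobiPoly_le (n : ℕ) : ∀ {α β : ℝ}, 0 ≤ β → β ≤ α →
    |(jacobiPoly α β n).eval (-1)| ≤ (jacobiPoly α β n).eval 1 := by
  induction n with
  | zero =>
    intro α β hβ hαβ
    have h₁ : 0 < Gamma (α + 1) := Gamma_pos_of_pos (by linarith)
    have h₂ : 0 < Gamma (α + β + 1) := Gamma_pos_of_pos (by linarith)
    simpa [jacobiPoly, jacobiShifted, jacobiCoeff] using (abs_of_pos (div_pos h₂ h₁)).le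
  | succ n ih =>
    intro α β hβ hαβ
    have hα : 0 ≤ α := hβ.trans hαβ
    have hih := ih (add_nonneg hβ zero_le_one) (add_le_add_left hαβ 1)
    have hodeR := jacobiPoly_ode hα hβ (n + 1) 1
    have hodeL := jacobiPoly_ode hα hβ (n + 1) (-1)
    simp only [derivative_jacobiPoly_succ, eval_mul, eval_C] at hodeR hodeL
    push_cast at hodeR hodeL
    have hκ : 0 < ((n : ℝ) + 1) * (n + 1 + α + β + 1) := by positivity
    have hR : ((n : ℝ) + 1) * (n + 1 + α + β + 1) * (jacobiPoly α β (n + 1)).eval 1 =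
        (n + 1) * ((α + 1) * (jacobiPoly (α + 1) (β + 1) n).eval 1) := by
      linear_combination hodeR
    have hL : ((n : ℝ) + 1) * (n + 1 + α + β + 1) * (jacobiPoly α β (n + 1)).eval (-1) =
        -((n + 1) * ((β + 1) * (jacobiPoly (α + 1) (β + 1) n).eval (-1))) := by
      linear_combination hodeL
    refine le_of_mul_le_mul_left ?_ hκ
    rw [← abs_of_pos hκ, ← abs_mul, abs_of_pos hκ, hL, hR, abs_neg, abs_mul, abs_mul,
      abs_of_nonneg (by positivity : (0 : ℝ) ≤ n + 1), abs_of_nonneg (by positivity : 0 ≤ β + 1)]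
    gcongr

/-- Sonin's function of the Jacobi polynomial `P`: it dominates `n(n+α+β+1) P²`, with equality
at `±1`. -/
def soninFn (α β : ℝ) (n : ℕ) (x : ℝ) : ℝ :=
  n * (n + α + β + 1) * (jacobiPoly α β n).eval x ^ 2 +
    (1 - x ^ 2) * (jacobiPoly α β n).derivative.eval x ^ 2

lemma hasDerivAt_soninFn (hα : 0 ≤ α) (hβ : 0 ≤ β) (n : ℕ) (x : ℝ) :
    HasDerivAt (soninFn α β n)
      (2 * (jacobiPoly α β n).derivative.eval x ^ 2 * (α - β + (α + β + 1) * x)) x := by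
  have hsq : HasDerivAt (fun x : ℝ => 1 - x ^ 2) (-(2 * x)) x := by
    simpa using ((hasDerivAt_id x).pow 2).const_sub 1
  refine ((((jacobiPoly α β n).hasDerivAt x).pow 2).const_mul ((n : ℝ) * (n + α + β + 1)) |>.add
    (hsq.mul (((jacobiPoly α β n).derivative.hasDerivAt x).pow 2))).congr_deriv ?_
  simp only [Pi.pow_apply]
  push_cast
  linear_combination (2 * (jacobiPoly α β n).derivative.eval x) * jacobiPoly_ode hα hβ n x

lemma soninFn_le_max (hα : 0 ≤ α) (hβ : 0 ≤ β) (n : ℕ) {x : ℝ} (hx : x ∈ Icc (-1) 1) :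
    soninFn α β n x ≤ max (soninFn α β n (-1)) (soninFn α β n 1) := by
  have hd := hasDerivAt_soninFn hα hβ n
  rcases le_total (α - β + (α + β + 1) * x) 0 with h | h
  · refine le_max_of_le_left (antitoneOn_Icc_of_hasDerivAt (fun t _ => hd t) (fun t ht => ?_)
      (left_mem_Icc.2 hx.1) (right_mem_Icc.2 hx.1) hx.1)
    refine mul_nonpos_of_nonneg_of_nonpos (by positivity) ?_
    nlinarith [ht.2]
  · refine le_max_of_le_right (monotoneOn_Icc_of_hasDerivAt (fun t _ => hd t) (fun t ht => ?_)
      (left_mem_Icc.2 hx.2) (right_mem_Icc.2 hx.2) hx.2)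
    refine mul_nonneg (by positivity) ?_
    nlinarith [ht.1]

theorem abs_eval_jacobiPoly_le (hβ : 0 ≤ β) (hαβ : β ≤ α) (n : ℕ) {x : ℝ}
    (hx : x ∈ Icc (-1) 1) : |(jacobiPoly α β n).eval x| ≤ (jacobiPoly α β n).eval 1 := by
  have hα : 0 ≤ α := hβ.trans hαβ
  have hpos := eval_one_jacobiPoly_pos hα hβ n
  rcases eq_or_ne n 0 with rfl | hn
  · simpa [jacobiPoly, jacobiShifted] using
      (abs_of_pos (by simpa [jacobiPoly, jacobiShifted] using hpos)).le
  have hκ : 0 < (n : ℝ) * (n + α + β + 1) := by positivity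
  have hleft : soninFn α β n (-1) ≤ soninFn α β n 1 := by
    have h := (sq_le_sq₀ (abs_nonneg _) hpos.le).2 (abs_eval_neg_one_jacobiPoly_le n hβ hαβ)
    rw [sq_abs] at h
    simp only [soninFn, neg_sq, one_pow, sub_self, zero_mul, add_zero]
    gcongr
  have hx' : 0 ≤ 1 - x ^ 2 := by nlinarith [hx.1, hx.2]
  have hF := (soninFn_le_max hα hβ n hx).trans_eq (max_eq_right hleft)
  simp only [soninFn, one_pow, sub_self, zero_mul, add_zero] at hF
  refine abs_le_of_sq_le_sq (le_of_mul_le_mul_left ?_ hκ) hpos.le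
  linarith [mul_nonneg hx' (sq_nonneg ((jacobiPoly α β n).derivative.eval x))]

end JacobiPolynomial

/-! ### Oscillators with concave potential -/

/-- A concave potential `Q` on `(l, r)` with its derivatives `Q₁ = Q'` and `Q₂ = Q''`. -/
structure IsConcavePotential (l r : ℝ) (Q Q₁ Q₂ : ℝ → ℝ) : Prop where
  hasDerivAt_potential : ∀ t ∈ Ioo l r, HasDerivAt Q (Q₁ t) t
  hasDerivAt_potential' : ∀ t ∈ Ioo l r, HasDerivAt Q₁ (Q₂ t) t
  potential''_nonpos : ∀ t ∈ Ioo l r, Q₂ t ≤ 0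

/-- A solution `v`, with derivative `v₁`, of the oscillator equation `v'' = -Q v` on `(l, r)` for a
concave potential `Q`. -/
structure IsConcaveOscillator (l r : ℝ) (Q Q₁ Q₂ v v₁ : ℝ → ℝ) : Prop
    extends IsConcavePotential l r Q Q₁ Q₂ where
  hasDerivAt : ∀ t ∈ Ioo l r, HasDerivAt v (v₁ t) t
  hasDerivAt' : ∀ t ∈ Ioo l r, HasDerivAt v₁ (-(Q t * v t)) t

/-- The relative change `Q' / (2 Q^{3/2})` of the local frequency `√Q` per radian; the WKB
approximation is accurate where it is small. -/
def adiabaticity (Q Q₁ : ℝ → ℝ) (t : ℝ) : ℝ :=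
  Q₁ t / (2 * √(Q t) ^ 3)

/-- The energy `v'² / √Q + √Q v²` of the oscillator `v'' = -Q v`, corrected by the adiabaticity
so that its derivative is one order smaller. -/
def oscillatorEnergy (Q Q₁ v v₁ : ℝ → ℝ) (t : ℝ) : ℝ :=
  v₁ t ^ 2 / √(Q t) + √(Q t) * v t ^ 2 + adiabaticity Q Q₁ t * (v t * v₁ t)

lemma abs_mul_le_two_thirds_energy {Q Q₁ : ℝ → ℝ} (v v₁ : ℝ → ℝ) {t : ℝ} (hQ : 0 < Q t)
    (hh : |adiabaticity Q Q₁ t| ≤ 1 / 2) :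
    |v t * v₁ t| ≤ 2 / 3 * oscillatorEnergy Q Q₁ v v₁ t := by
  have hR : 0 < √(Q t) := sqrt_pos.2 hQ
  have hAMGM : 2 * |v t * v₁ t| ≤ v₁ t ^ 2 / √(Q t) + √(Q t) * v t ^ 2 := by
    rw [div_add' _ _ _ hR.ne', le_div_iff₀ hR, abs_mul, ← sq_abs (v t), ← sq_abs (v₁ t)]
    linarith [sq_nonneg (|v₁ t| - √(Q t) * |v t|)]
  have hcorr : |adiabaticity Q Q₁ t * (v t * v₁ t)| ≤ 1 / 2 * |v t * v₁ t| := by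
    rw [abs_mul]
    gcongr
  unfold oscillatorEnergy
  linarith [(abs_le.1 hcorr).1]

lemma sqrt_mul_sq_le_energy {Q Q₁ : ℝ → ℝ} (v v₁ : ℝ → ℝ) {t : ℝ} (hQ : 0 < Q t)
    (hh : |adiabaticity Q Q₁ t| ≤ 1 / 2) :
    15 / 16 * (√(Q t) * v t ^ 2) ≤ oscillatorEnergy Q Q₁ v v₁ t := by
  have hsquare : oscillatorEnergy Q Q₁ v v₁ t =
      (v₁ t + adiabaticity Q Q₁ t / 2 * (√(Q t) * v t)) ^ 2 / √(Q t) +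
        (1 - adiabaticity Q Q₁ t ^ 2 / 4) * (√(Q t) * v t ^ 2) := by
    unfold oscillatorEnergy
    field_simp
    ring
  have hh' : adiabaticity Q Q₁ t ^ 2 ≤ (1 / 2) ^ 2 := sq_le_sq' (abs_le.1 hh).1 (abs_le.1 hh).2
  rw [hsquare]
  refine le_add_of_nonneg_of_le (by positivity) ?_
  gcongr
  linarith

lemma adiabaticity_comp_const_sub (Q Q₁ : ℝ → ℝ) (c t : ℝ) :
    adiabaticity (fun t => Q (c - t)) (fun t => -Q₁ (c - t)) t = -adiabaticity Q Q₁ (c - t) :=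
  neg_div _ _

/-- The left half of the hypotheses of `IsConcaveOscillator.mul_sq_le_of_window`: to the right of
the transition point `x`, where the adiabaticity is `1/2` and the frequency is at least `ρ`, lies
an interval `[a, a + w]` of many oscillations, on which the adiabaticity is small. -/
structure IsWindowEntrance (l : ℝ) (Q Q₁ : ℝ → ℝ) (x a w ρ : ℝ) : Prop where
  lt : l < x
  le : x ≤ a
  pos : 0 < Q x
  adiabaticity_eq : adiabaticity Q Q₁ x = 1 / 2
  le_sqrt : ρ ≤ √(Q x)
  adiabaticity_le : adiabaticity Q Q₁ a ≤ 1 / 100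
  oscillations : 100 ≤ √(Q a) * w

lemma le_exp_sub_mul_of_exp_mul_le {a b p q : ℝ} (h : exp a * p ≤ exp b * q) :
    p ≤ exp (b - a) * q := by
  rwa [exp_sub, div_mul_eq_mul_div, le_div_iff₀ (exp_pos a), mul_comm p]

namespace IsConcavePotential

variable {l r : ℝ} {Q Q₁ Q₂ : ℝ → ℝ}

lemma reflect (H : IsConcavePotential l r Q Q₁ Q₂) :
    IsConcavePotential l r (fun t => Q (l + r - t)) (fun t => -Q₁ (l + r - t))
      (fun t => Q₂ (l + r - t)) := by
  have hmem {t : ℝ} (ht : t ∈ Ioo l r) : l + r - t ∈ Ioo l r :=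
    ⟨by linarith [ht.2], by linarith [ht.1]⟩
  exact ⟨fun t ht => (H.hasDerivAt_potential _ (hmem ht)).comp_const_sub (l + r) t,
    fun t ht => by
      simpa using ((H.hasDerivAt_potential' _ (hmem ht)).comp_const_sub (l + r) t).fun_neg,
    fun t ht => H.potential''_nonpos _ (hmem ht)⟩

variable (H : IsConcavePotential l r Q Q₁ Q₂)

include H

lemma concaveOn : ConcaveOn ℝ (Ioo l r) Q := by
  refine concaveOn_of_hasDerivWithinAt2_nonpos (f' := Q₁) (f'' := Q₂) (convex_Ioo l r)
    (fun t ht => (H.hasDerivAt_potential t ht).continuousAt.continuousWithinAt) ?_ ?_ ?_ <;>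
  rw [interior_Ioo]
  exacts [fun t ht => (H.hasDerivAt_potential t ht).hasDerivWithinAt,
    fun t ht => (H.hasDerivAt_potential' t ht).hasDerivWithinAt, H.potential''_nonpos]

lemma le_tangent {x y : ℝ} (hx : x ∈ Ioo l r) (hy : y ∈ Ioo l r) :
    Q y ≤ Q x + Q₁ x * (y - x) := by
  have hd := H.hasDerivAt_potential x hx
  rcases lt_trichotomy x y with h | rfl | h
  · have := H.concaveOn.slope_le_of_hasDerivAt hx hy h hd
    rw [slope_def_field, div_le_iff₀ (sub_pos.2 h)] at this
    linarith
  · simp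
  · have := H.concaveOn.le_slope_of_hasDerivAt hy hx h hd
    rw [slope_def_field, le_div_iff₀ (sub_pos.2 h)] at this
    linarith

lemma antitoneOn_deriv : AntitoneOn Q₁ (Ioo l r) := by
  intro x hx y hy hxy
  rcases hxy.eq_or_lt with rfl | hxy
  · rfl
  · nlinarith [H.le_tangent hx hy, H.le_tangent hy hx]

lemma hasDerivAt_adiabaticity {t : ℝ} (ht : t ∈ Ioo l r) (hQ : 0 < Q t) :
    HasDerivAt (adiabaticity Q Q₁)
      (Q₂ t / (2 * √(Q t) ^ 3) - 3 * Q₁ t ^ 2 / (4 * √(Q t) ^ 5)) t := by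
  have hR : 0 < √(Q t) := sqrt_pos.2 hQ
  have hsqrt := (H.hasDerivAt_potential t ht).sqrt hQ.ne'
  refine ((H.hasDerivAt_potential' t ht).div ((hsqrt.pow 3).const_mul 2)
    (mul_pos two_pos (pow_pos hR 3)).ne').congr_deriv ?_
  simp only [Pi.pow_apply]
  field_simp
  ring

lemma deriv_adiabaticity_nonpos {t : ℝ} (ht : t ∈ Ioo l r) :
    Q₂ t / (2 * √(Q t) ^ 3) - 3 * Q₁ t ^ 2 / (4 * √(Q t) ^ 5) ≤ 0 := by
  have h₁ : Q₂ t / (2 * √(Q t) ^ 3) ≤ 0 :=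
    div_nonpos_of_nonpos_of_nonneg (H.potential''_nonpos t ht) (by positivity)
  have h₂ : 0 ≤ 3 * Q₁ t ^ 2 / (4 * √(Q t) ^ 5) := by positivity
  linarith

lemma antitoneOn_adiabaticity {x y : ℝ} (hx : l < x) (hy : y < r)
    (hQ : ∀ t ∈ Icc x y, 0 < Q t) : AntitoneOn (adiabaticity Q Q₁) (Icc x y) :=
  antitoneOn_Icc_of_hasDerivAt
    (fun t ht => H.hasDerivAt_adiabaticity (Icc_subset_Ioo hx hy ht) (hQ t ht))
    fun _ ht => H.deriv_adiabaticity_nonpos (Icc_subset_Ioo hx hy ht)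

lemma exists_transition {e a : ℝ} (he : l < e) (hea : e ≤ a) (ha : a < r) (hQe : Q e ≤ 0)
    (hQa : 0 < Q a) (hh : adiabaticity Q Q₁ a ≤ 1 / 2) :
    ∃ x ∈ Icc e a, 0 < Q x ∧ adiabaticity Q Q₁ x = 1 / 2 := by
  have hmem {t : ℝ} (ht : t ∈ Icc e a) : t ∈ Ioo l r := Icc_subset_Ioo he ha ht
  have hcont : ContinuousOn (fun t => Q₁ t - √(Q t) ^ 3) (Icc e a) := fun t ht =>
    ((H.hasDerivAt_potential' t (hmem ht)).continuousAt.sub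
      ((H.hasDerivAt_potential t (hmem ht)).continuousAt.sqrt.pow 3)).continuousWithinAt
  have hRa : 0 < √(Q a) := sqrt_pos.2 hQa
  have hleft : 0 ≤ Q₁ e - √(Q e) ^ 3 := by
    have := H.le_tangent (hmem (left_mem_Icc.2 hea)) (hmem (right_mem_Icc.2 hea))
    rw [sqrt_eq_zero_of_nonpos hQe]
    by_contra! hneg
    nlinarith
  have hright : Q₁ a - √(Q a) ^ 3 ≤ 0 := by
    rw [adiabaticity, div_le_iff₀ (by positivity)] at hh
    linarith
  obtain ⟨x, hx, hx₀⟩ := intermediate_value_Icc' hea hcont ⟨hright, hleft⟩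
  have hQ₁ : Q₁ x = √(Q x) ^ 3 := sub_eq_zero.1 hx₀
  have hQx : 0 < Q x := by
    by_contra! hneg
    have := H.le_tangent (hmem hx) (hmem (right_mem_Icc.2 hea))
    rw [hQ₁, sqrt_eq_zero_of_nonpos hneg] at this
    linarith
  refine ⟨x, hx, hQx, ?_⟩
  rw [adiabaticity, hQ₁]
  field_simp

section Window

variable {xL xR a b ρ : ℝ} (hL : IsWindowEntrance l Q Q₁ xL a (b - a) ρ)
  (hR : IsWindowEntrance l (fun t => Q (l + r - t)) (fun t => -Q₁ (l + r - t)) (l + r - xR)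
    (l + r - b) (b - a) ρ)

include hL hR

lemma window_bounds :
    xR < r ∧ b ≤ xR ∧ a ≤ b ∧ adiabaticity Q Q₁ xR = -(1 / 2) ∧
      -(1 / 100) ≤ adiabaticity Q Q₁ b ∧
      (∀ y ∈ Icc xL xR, 0 < Q y) ∧ ∀ y ∈ Icc xL xR, ρ ≤ √(Q y) := by
  obtain ⟨hlt, hle, hpos, heq, hsqrt, hadi, -⟩ := hR
  rw [adiabaticity_comp_const_sub] at heq hadi
  simp only [sub_sub_cancel] at hpos heq hsqrt hadi
  have hab : a ≤ b := by
    by_contra! hlt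
    nlinarith [hL.oscillations, sqrt_nonneg (Q a)]
  have hmin {y : ℝ} (hy : y ∈ Icc xL xR) : min (Q xL) (Q xR) ≤ Q y := by
    have hx : xL ≤ xR := hy.1.trans hy.2
    exact H.concaveOn.min_le_of_mem_Icc ⟨hL.lt, by linarith⟩
      ⟨hL.lt.trans_le hx, by linarith⟩ hy
  refine ⟨by linarith, by linarith, hab, by linarith, by linarith,
    fun y hy => (lt_min hL.pos hpos).trans_le (hmin hy), fun y hy => ?_⟩
  rcases min_le_iff.1 (hmin hy) with h | h
  exacts [hL.le_sqrt.trans (sqrt_le_sqrt h), hsqrt.trans (sqrt_le_sqrt h)]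

lemma abs_adiabaticity_le_of_window :
    (∀ y ∈ Icc xL xR, |adiabaticity Q Q₁ y| ≤ 1 / 2) ∧
      ∀ y ∈ Icc a b, |adiabaticity Q Q₁ y| ≤ 1 / 100 := by
  obtain ⟨hxR, hbR, hab, heq, hadi, hpos, -⟩ := H.window_bounds hL hR
  have hLa := hL.le
  have hanti := H.antitoneOn_adiabaticity hL.lt hxR hpos
  refine ⟨fun y hy => abs_le.2 ⟨?_, ?_⟩, fun y hy => abs_le.2 ⟨?_, ?_⟩⟩
  · exact heq.ge.trans (hanti hy (right_mem_Icc.2 (hy.1.trans hy.2)) hy.2)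
  · exact (hanti (left_mem_Icc.2 (hy.1.trans hy.2)) hy hy.1).trans hL.adiabaticity_eq.le
  · exact hadi.trans
      (hanti ⟨hLa.trans hy.1, hy.2.trans hbR⟩ ⟨hLa.trans hab, hbR⟩ hy.2)
  · exact (hanti ⟨hLa, hab.trans hbR⟩ ⟨hLa.trans hy.1, hy.2.trans hbR⟩ hy.1).trans
      hL.adiabaticity_le

end Window

end IsConcavePotential

namespace IsConcaveOscillator

variable {l r : ℝ} {Q Q₁ Q₂ v v₁ : ℝ → ℝ}

lemma reflect (H : IsConcaveOscillator l r Q Q₁ Q₂ v v₁) :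
    IsConcaveOscillator l r (fun t => Q (l + r - t)) (fun t => -Q₁ (l + r - t))
      (fun t => Q₂ (l + r - t)) (fun t => v (l + r - t)) (fun t => -v₁ (l + r - t)) := by
  have hmem {t : ℝ} (ht : t ∈ Ioo l r) : l + r - t ∈ Ioo l r :=
    ⟨by linarith [ht.2], by linarith [ht.1]⟩
  exact ⟨H.toIsConcavePotential.reflect,
    fun t ht => (H.hasDerivAt _ (hmem ht)).comp_const_sub (l + r) t,
    fun t ht => by simpa using ((H.hasDerivAt' _ (hmem ht)).comp_const_sub (l + r) t).fun_neg⟩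

variable (H : IsConcaveOscillator l r Q Q₁ Q₂ v v₁)

include H

lemma hasDerivAt_energy {t : ℝ} (ht : t ∈ Ioo l r) (hQ : 0 < Q t) :
    HasDerivAt (oscillatorEnergy Q Q₁ v v₁)
      ((Q₂ t / (2 * √(Q t) ^ 3) - 3 * Q₁ t ^ 2 / (4 * √(Q t) ^ 5)) * (v t * v₁ t)) t := by
  have hR : 0 < √(Q t) := sqrt_pos.2 hQ
  have hQR : Q t = √(Q t) ^ 2 := (sq_sqrt hQ.le).symm
  have hsqrt := (H.hasDerivAt_potential t ht).sqrt hQ.ne'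
  have hv := H.hasDerivAt t ht
  have hv' := H.hasDerivAt' t ht
  refine ((((hv'.pow 2).div hsqrt hR.ne').add (hsqrt.mul (hv.pow 2))).add
    ((H.hasDerivAt_adiabaticity ht hQ).mul (hv.mul hv'))).congr_deriv ?_
  simp only [Pi.pow_apply, Pi.mul_apply, adiabaticity]
  push_cast
  generalize √(Q t) = R at hR hQR ⊢
  rw [hQR]
  field_simp
  ring

/-- The two exponentials are monotone because `|v v'| ≤ ⅔ G` for the energy `G`. -/
lemma energy_comparison {x y : ℝ} (hx : l < x) (hxy : x ≤ y) (hy : y < r)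
    (hQ : ∀ t ∈ Icc x y, 0 < Q t) (hh : ∀ t ∈ Icc x y, |adiabaticity Q Q₁ t| ≤ 1 / 2) :
    oscillatorEnergy Q Q₁ v v₁ y ≤
        exp (2 / 3 * (adiabaticity Q Q₁ x - adiabaticity Q Q₁ y)) *
          oscillatorEnergy Q Q₁ v v₁ x ∧
      oscillatorEnergy Q Q₁ v v₁ x ≤
        exp (2 / 3 * (adiabaticity Q Q₁ x - adiabaticity Q Q₁ y)) *
          oscillatorEnergy Q Q₁ v v₁ y := by
  have hmem {t : ℝ} (ht : t ∈ Icc x y) : t ∈ Ioo l r := Icc_subset_Ioo hx hy ht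
  have hexp (c t : ℝ) (ht : t ∈ Icc x y) :=
    ((H.hasDerivAt_adiabaticity (hmem ht) (hQ t ht)).const_mul c).exp.mul
      (H.hasDerivAt_energy (hmem ht) (hQ t ht))
  have hbound (t : ℝ) (ht : t ∈ Icc x y) :=
    abs_le.1 (abs_mul_le_two_thirds_energy v v₁ (hQ t ht) (hh t ht))
  have hanti := antitoneOn_Icc_of_hasDerivAt (hexp (2 / 3)) fun t ht => by
    have := mul_nonneg (exp_pos (2 / 3 * adiabaticity Q Q₁ t)).le
      (mul_nonneg (neg_nonneg.2 (H.deriv_adiabaticity_nonpos (hmem ht)))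
        (neg_le_iff_add_nonneg.1 (hbound t ht).1))
    linarith
  have hmono := monotoneOn_Icc_of_hasDerivAt (hexp (-(2 / 3))) fun t ht => by
    have := mul_nonneg (exp_pos (-(2 / 3) * adiabaticity Q Q₁ t)).le
      (mul_nonneg (neg_nonneg.2 (H.deriv_adiabaticity_nonpos (hmem ht)))
        (sub_nonneg.2 (hbound t ht).2))
    linarith
  have hle := hanti (left_mem_Icc.2 hxy) (right_mem_Icc.2 hxy) hxy
  have hge := hmono (left_mem_Icc.2 hxy) (right_mem_Icc.2 hxy) hxy
  simp only [Pi.mul_apply] at hle hge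
  exact ⟨(le_exp_sub_mul_of_exp_mul_le hle).trans_eq (by ring_nf),
    (le_exp_sub_mul_of_exp_mul_le hge).trans_eq (by ring_nf)⟩

lemma energy_le_three_halves {x y s t : ℝ} (hx : l < x) (hy : y < r)
    (hQ : ∀ t ∈ Icc x y, 0 < Q t) (hh : ∀ t ∈ Icc x y, |adiabaticity Q Q₁ t| ≤ 1 / 2)
    (hs : s ∈ Icc x y) (ht : t ∈ Icc x y) (hht : |adiabaticity Q Q₁ t| ≤ 1 / 100) :
    oscillatorEnergy Q Q₁ v v₁ s ≤ 3 / 2 * oscillatorEnergy Q Q₁ v v₁ t ∧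
      oscillatorEnergy Q Q₁ v v₁ t ≤ 3 / 2 * oscillatorEnergy Q Q₁ v v₁ s := by
  have hnonneg (u : ℝ) (hu : u ∈ Icc x y) : 0 ≤ oscillatorEnergy Q Q₁ v v₁ u := by
    linarith [(abs_nonneg _).trans (abs_mul_le_two_thirds_energy v v₁ (hQ u hu) (hh u hu))]
  have hexp {c : ℝ} (hc : c ≤ 51 / 100) : exp (2 / 3 * c) ≤ 3 / 2 := by
    have h : exp (17 / 100) ≤ 61 / 50 := by
      have := exp_bound_div_one_sub_of_interval (x := 17 / 100) (by norm_num) (by norm_num)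
      exact this.trans (by norm_num)
    calc exp (2 / 3 * c) ≤ exp (17 / 100 + 17 / 100) := exp_le_exp.2 (by linarith)
      _ = exp (17 / 100) * exp (17 / 100) := exp_add _ _
      _ ≤ 61 / 50 * (61 / 50) := by gcongr
      _ ≤ 3 / 2 := by norm_num
  have hs' := abs_le.1 (hh s hs)
  have ht' := abs_le.1 hht
  rcases le_total s t with h | h
  · have hsub := Icc_subset_Icc hs.1 ht.2
    have hG := H.energy_comparison (hx.trans_le hs.1) h (ht.2.trans_lt hy)
      (fun u hu => hQ u (hsub hu)) fun u hu => hh u (hsub hu)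
    have hK := hexp (c := adiabaticity Q Q₁ s - adiabaticity Q Q₁ t) (by linarith)
    exact ⟨hG.2.trans (mul_le_mul_of_nonneg_right hK (hnonneg t ht)),
      hG.1.trans (mul_le_mul_of_nonneg_right hK (hnonneg s hs))⟩
  · have hsub := Icc_subset_Icc ht.1 hs.2
    have hG := H.energy_comparison (hx.trans_le ht.1) h (hs.2.trans_lt hy)
      (fun u hu => hQ u (hsub hu)) fun u hu => hh u (hsub hu)
    have hK := hexp (c := adiabaticity Q Q₁ t - adiabaticity Q Q₁ s) (by linarith)
    exact ⟨hG.1.trans (mul_le_mul_of_nonneg_right hK (hnonneg t ht)),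
      hG.2.trans (mul_le_mul_of_nonneg_right hK (hnonneg s hs))⟩

lemma hasDerivAt_mul_div_sqrt {t : ℝ} (ht : t ∈ Ioo l r) (hQ : 0 < Q t) :
    HasDerivAt (fun t => v t * v₁ t / √(Q t))
      (v₁ t ^ 2 / √(Q t) - √(Q t) * v t ^ 2 - adiabaticity Q Q₁ t * (v t * v₁ t)) t := by
  have hR : 0 < √(Q t) := sqrt_pos.2 hQ
  have hQR : Q t = √(Q t) ^ 2 := (sq_sqrt hQ.le).symm
  have hsqrt := (H.hasDerivAt_potential t ht).sqrt hQ.ne'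
  refine (((H.hasDerivAt t ht).mul (H.hasDerivAt' t ht)).div hsqrt hR.ne').congr_deriv ?_
  simp only [Pi.mul_apply, adiabaticity]
  generalize √(Q t) = R at hR hQR ⊢
  rw [hQR]
  field_simp
  ring

/-- Up to the derivative of `v v' / √Q` the energy is `2 √Q v²`, whose integral is at most `2 W`. -/
lemma mul_length_le_of_energy {a b W E : ℝ} (ha : l < a) (hab : a ≤ b) (hb : b < r)
    (hQ : ∀ t ∈ Icc a b, 0 < Q t) (hW : ∀ t ∈ Icc a b, √(Q t) ≤ W)
    (hh : ∀ t ∈ Icc a b, |adiabaticity Q Q₁ t| ≤ 1 / 100)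
    (hE : ∀ t ∈ Icc a b, E ≤ 3 / 2 * oscillatorEnergy Q Q₁ v v₁ t ∧
      oscillatorEnergy Q Q₁ v v₁ t ≤ 3 / 2 * E)
    (hRa : 100 ≤ √(Q a) * (b - a)) (hRb : 100 ≤ √(Q b) * (b - a))
    (hint : ∫ t in a..b, v t ^ 2 ≤ 1) : E * (b - a) ≤ 16 / 5 * W := by
  have hmem {t : ℝ} (ht : t ∈ Icc a b) : t ∈ Ioo l r := Icc_subset_Ioo ha hb ht
  have hvv (t : ℝ) (ht : t ∈ Icc a b) :=
    abs_mul_le_two_thirds_energy v v₁ (hQ t ht) ((hh t ht).trans (by norm_num))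
  have hdiff (t : ℝ) (ht : t ∈ Icc a b) :=
    ((hasDerivAt_id t).const_mul (148 / 225 * E)).fun_sub
      (H.hasDerivAt_mul_div_sqrt (hmem ht) (hQ t ht))
  have hcont : ContinuousOn (fun t => 2 * W * v t ^ 2) (Icc a b) := fun t ht =>
    ((H.hasDerivAt t (hmem ht)).continuousAt.pow 2).const_mul (2 * W) |>.continuousWithinAt
  have hFTC := intervalIntegral.sub_le_integral_of_hasDeriv_right_of_le hab
    (fun t ht => (hdiff t ht).continuousAt.continuousWithinAt)
    (fun t ht => (hdiff t (Ioo_subset_Icc_self ht)).hasDerivWithinAt)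
    hcont.integrableOn_Icc fun t ht => by
      have ht' := Ioo_subset_Icc_self ht
      have hcorr : |adiabaticity Q Q₁ t * (v t * v₁ t)| ≤ 1 / 100 * |v t * v₁ t| := by
        rw [abs_mul]
        exact mul_le_mul_of_nonneg_right (hh t ht') (abs_nonneg _)
      have hWv := mul_le_mul_of_nonneg_right (hW t ht') (sq_nonneg (v t))
      have hE' := (hE t ht').1
      have hvv' := hvv t ht'
      unfold oscillatorEnergy at hE' hvv'
      linarith [le_abs_self (adiabaticity Q Q₁ t * (v t * v₁ t))]
  have hboundary (t : ℝ) (ht : t ∈ Icc a b) (hR : 100 ≤ √(Q t) * (b - a)) :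
      |v t * v₁ t / √(Q t)| ≤ E * (b - a) / 100 := by
    have hE₀ : |v t * v₁ t| ≤ E := by linarith [hvv t ht, (hE t ht).2]
    rw [abs_div, abs_of_nonneg (sqrt_nonneg _), div_le_iff₀ (sqrt_pos.2 (hQ t ht))]
    nlinarith [mul_le_mul_of_nonneg_left hR ((abs_nonneg _).trans hE₀)]
  have hWint := mul_le_mul_of_nonneg_left hint
    (mul_nonneg two_pos.le ((sqrt_nonneg _).trans (hW a (left_mem_Icc.2 hab))))
  rw [intervalIntegral.integral_const_mul] at hFTC
  have h₁ := abs_le.1 (hboundary a (left_mem_Icc.2 hab) hRa)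
  have h₂ := abs_le.1 (hboundary b (right_mem_Icc.2 hab) hRb)
  simp only [id] at hFTC
  linarith [h₁.1, h₂.2]

lemma hasDerivAt_sq {t : ℝ} (ht : t ∈ Ioo l r) :
    HasDerivAt (fun t => v t ^ 2) (2 * (v t * v₁ t)) t :=
  ((H.hasDerivAt t ht).pow 2).congr_deriv (by push_cast; ring)

lemma mul_deriv_eq_zero_of_isMaxOn {s : ℝ} (hs : s ∈ Ioo l r)
    (hmax : IsMaxOn (fun t => v t ^ 2) (Ioo l r) s) : v s * v₁ s = 0 := by
  have := (hmax.isLocalMax (Ioo_mem_nhds hs.1 hs.2)).hasDerivAt_eq_zero (H.hasDerivAt_sq hs)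
  linarith

/-- The differentiated function is the value at `x` of the tangent line of `v²` at `t`. -/
lemma hasDerivAt_tangent_sq (x : ℝ) {t : ℝ} (ht : t ∈ Ioo l r) :
    HasDerivAt (fun t => v t ^ 2 + (x - t) * (2 * (v t * v₁ t)))
      ((x - t) * (2 * v₁ t ^ 2 - 2 * (Q t * v t ^ 2))) t := by
  refine ((H.hasDerivAt_sq ht).add (((hasDerivAt_id t).const_sub x).mul
    (((H.hasDerivAt t ht).mul (H.hasDerivAt' t ht)).const_mul 2))).congr_deriv ?_
  simp only [id, Pi.mul_apply]
  ring

/-- Where the tangent line of `Q` at `x` is negative so is `Q`, and `v²` is convex. -/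
lemma sq_le_tangent_sq_near_transition {s x : ℝ} (hs : s ∈ Ioo l r) (hsx : s ≤ x) (hx : x < r)
    (hQ : 0 < Q x) (hQ₁ : Q₁ x = √(Q x) ^ 3)
    (hmax : IsMaxOn (fun t => v t ^ 2) (Ioo l r) s) :
    ∃ t ∈ Icc s x, √(Q x) * (x - t) ≤ 1 ∧ v s ^ 2 ≤ v t ^ 2 + (x - t) * (2 * (v t * v₁ t)) := by
  have hR : 0 < √(Q x) := sqrt_pos.2 hQ
  have hcrit := H.mul_deriv_eq_zero_of_isMaxOn hs hmax
  have hR₁ : √(Q x) * (√(Q x))⁻¹ = 1 := mul_inv_cancel₀ hR.ne'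
  rcases le_total s (x - (√(Q x))⁻¹) with h | h
  · have hle : x - (√(Q x))⁻¹ ≤ x := sub_le_self _ (inv_nonneg.2 hR.le)
    refine ⟨x - (√(Q x))⁻¹, ⟨h, hle⟩, by rw [sub_sub_cancel, hR₁], ?_⟩
    have hmono := monotoneOn_Icc_of_hasDerivAt
      (fun t ht => H.hasDerivAt_tangent_sq x (Icc_subset_Ioo hs.1 (hle.trans_lt hx) ht))
      fun t ht => ?_
    · simpa [hcrit] using hmono (left_mem_Icc.2 h) (right_mem_Icc.2 h) h
    · have hQt : Q t ≤ 0 := by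
        have htan := H.le_tangent ⟨hs.1.trans_le hsx, hx⟩
          (Icc_subset_Ioo hs.1 (hle.trans_lt hx) ht)
        have hQR := sq_sqrt hQ.le
        have : √(Q x) ^ 3 * (√(Q x))⁻¹ = Q x := by rw [pow_succ, mul_assoc, hR₁, mul_one, hQR]
        rw [hQ₁] at htan
        nlinarith [mul_le_mul_of_nonneg_left ht.2 (pow_pos hR 3).le]
      refine mul_nonneg (by linarith [ht.2]) ?_
      nlinarith [mul_nonneg (neg_nonneg.2 hQt) (sq_nonneg (v t)), sq_nonneg (v₁ t)]
  · refine ⟨s, ⟨le_rfl, hsx⟩, ?_, by simp [hcrit]⟩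
    nlinarith

lemma two_thirds_sq_le_of_transition {s x : ℝ} (hs : s ∈ Ioo l r) (hsx : s ≤ x) (hx : x < r)
    (hQ : 0 < Q x) (hh : adiabaticity Q Q₁ x = 1 / 2)
    (hmax : IsMaxOn (fun t => v t ^ 2) (Ioo l r) s) : 2 / 3 * v s ^ 2 ≤ v x ^ 2 := by
  have hR : 0 < √(Q x) := sqrt_pos.2 hQ
  have hQ₁ : Q₁ x = √(Q x) ^ 3 := by
    rw [adiabaticity, div_eq_iff (by positivity)] at hh
    linarith
  obtain ⟨t₀, ht₀, hRt₀, hle⟩ := H.sq_le_tangent_sq_near_transition hs hsx hx hQ hQ₁ hmax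
  have hmem {t : ℝ} (ht : t ∈ Icc t₀ x) : t ∈ Ioo l r :=
    Icc_subset_Ioo (hs.1.trans_le ht₀.1) hx ht
  have hpoly (t : ℝ) : HasDerivAt
      (fun t => v s ^ 2 * (√(Q x) ^ 2 * (x - t) ^ 2 - 2 / 3 * √(Q x) ^ 3 * (x - t) ^ 3))
      (v s ^ 2 * (-(2 * (x - t) * (√(Q x) ^ 2 - √(Q x) ^ 3 * (x - t))))) t := by
    have hsub := (hasDerivAt_id t).const_sub x
    refine ((((hsub.pow 2).const_mul (√(Q x) ^ 2)).sub
      ((hsub.pow 3).const_mul (2 / 3 * √(Q x) ^ 3))).const_mul (v s ^ 2)).congr_deriv ?_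
    simp only [id]
    push_cast
    ring
  have hmono := monotoneOn_Icc_of_hasDerivAt
    (fun t ht => (H.hasDerivAt_tangent_sq x (hmem ht)).fun_sub (hpoly t)) fun t ht => ?_
  · have := hmono (left_mem_Icc.2 ht₀.2) (right_mem_Icc.2 ht₀.2) ht₀.2
    have hcubic : √(Q x) ^ 2 * (x - t₀) ^ 2 - 2 / 3 * √(Q x) ^ 3 * (x - t₀) ^ 3 ≤ 1 / 3 := by
      have hu : 0 ≤ √(Q x) * (x - t₀) := mul_nonneg hR.le (sub_nonneg.2 ht₀.2)
      nlinarith [mul_nonneg (sq_nonneg (1 - √(Q x) * (x - t₀))) (add_nonneg one_pos.le hu)]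
    simp only [sub_self] at this
    nlinarith [mul_le_mul_of_nonneg_left hcubic (sq_nonneg (v s))]
  · have htan := H.le_tangent ⟨hs.1.trans_le hsx, hx⟩ (hmem ht)
    rw [hQ₁, ← sq_sqrt hQ.le, sqrt_sq hR.le] at htan
    have hL : 0 ≤ √(Q x) ^ 2 - √(Q x) ^ 3 * (x - t) := by
      have : √(Q x) * (x - t) ≤ 1 := le_trans (by gcongr; exact ht.1) hRt₀
      nlinarith [pow_pos hR 2]
    have hQv : Q t * v t ^ 2 ≤ (√(Q x) ^ 2 - √(Q x) ^ 3 * (x - t)) * v s ^ 2 :=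
      (mul_le_mul_of_nonneg_right (by linarith) (sq_nonneg _)).trans
        (mul_le_mul_of_nonneg_left (hmax (hmem ht)) hL)
    have hx' : 0 ≤ x - t := sub_nonneg.2 ht.2
    nlinarith [mul_le_mul_of_nonneg_left hQv hx', mul_nonneg hx' (sq_nonneg (v₁ t))]

section Window

variable {xL xR a b ρ : ℝ} (hL : IsWindowEntrance l Q Q₁ xL a (b - a) ρ)
  (hR : IsWindowEntrance l (fun t => Q (l + r - t)) (fun t => -Q₁ (l + r - t)) (l + r - xR)
    (l + r - b) (b - a) ρ)

include hL hR

lemma energy_mul_length_le {W y : ℝ} (hW : ∀ t ∈ Icc a b, √(Q t) ≤ W)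
    (hint : ∫ t in a..b, v t ^ 2 ≤ 1) (hy : y ∈ Icc xL xR) :
    oscillatorEnergy Q Q₁ v v₁ y * (b - a) ≤ 16 / 5 * W := by
  obtain ⟨hxR, hbR, hab, -, -, hpos, -⟩ := H.window_bounds hL hR
  obtain ⟨hh, hh'⟩ := H.abs_adiabaticity_le_of_window hL hR
  have hsub {t : ℝ} (ht : t ∈ Icc a b) : t ∈ Icc xL xR :=
    ⟨hL.le.trans ht.1, ht.2.trans hbR⟩
  have hosc : 100 ≤ √(Q b) * (b - a) := by simpa using hR.oscillations
  exact H.mul_length_le_of_energy (hL.lt.trans_le hL.le) hab (hbR.trans_lt hxR)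
    (fun t ht => hpos t (hsub ht)) hW hh'
    (fun t ht => H.energy_le_three_halves hL.lt hxR hpos hh hy (hsub ht) (hh' t ht))
    hL.oscillations hosc hint

lemma exists_le_energy {s : ℝ} (hs : s ∈ Ioo l r)
    (hmax : IsMaxOn (fun t => v t ^ 2) (Ioo l r) s) :
    ∃ y ∈ Icc xL xR, 5 / 8 * (ρ * v s ^ 2) ≤ oscillatorEnergy Q Q₁ v v₁ y := by
  obtain ⟨hxR, hbR, hab, -, -, hpos, hρ⟩ := H.window_bounds hL hR
  have hh := (H.abs_adiabaticity_le_of_window hL hR).1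
  have hx : xL ≤ xR := hL.le.trans (hab.trans hbR)
  suffices ∃ y ∈ Icc xL xR, 2 / 3 * v s ^ 2 ≤ v y ^ 2 by
    obtain ⟨y, hy, hle⟩ := this
    refine ⟨y, hy, le_trans ?_ (sqrt_mul_sq_le_energy v v₁ (hpos y hy) (hh y hy))⟩
    nlinarith [mul_le_mul_of_nonneg_right (hρ y hy) (sq_nonneg (v s)),
      mul_le_mul_of_nonneg_left hle (sqrt_nonneg (Q y))]
  rcases le_total s xL with hsL | hLs
  · exact ⟨xL, left_mem_Icc.2 hx, H.two_thirds_sq_le_of_transition hs hsL (hx.trans_lt hxR)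
      hL.pos hL.adiabaticity_eq hmax⟩
  rcases le_total s xR with hsR | hRs
  · exact ⟨s, ⟨hLs, hsR⟩, by linarith [sq_nonneg (v s)]⟩
  · have hmax' : IsMaxOn (fun t => v (l + r - t) ^ 2) (Ioo l r) (l + r - s) := fun t ht => by
      simpa using hmax ⟨by linarith [ht.2], by linarith [ht.1]⟩
    have := H.reflect.two_thirds_sq_le_of_transition
      ⟨by linarith [hs.2], by linarith [hs.1]⟩ (by linarith) (by linarith [hL.lt]) hR.pos
      hR.adiabaticity_eq hmax'
    exact ⟨xR, right_mem_Icc.2 hx, by simpa using this⟩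

/-- An oscillator is largest near a transition point, where the energy is comparable to its
average over the window `[a, b]`. -/
theorem mul_sq_le_of_window {W s : ℝ} (hW : ∀ t ∈ Icc a b, √(Q t) ≤ W)
    (hint : ∫ t in a..b, v t ^ 2 ≤ 1) (hs : s ∈ Ioo l r)
    (hmax : IsMaxOn (fun t => v t ^ 2) (Ioo l r) s) :
    ρ * v s ^ 2 * (b - a) ≤ 128 / 25 * W := by
  obtain ⟨y, hy, hle⟩ := H.exists_le_energy hL hR hs hmax
  have hab : 0 ≤ b - a := sub_nonneg.2 (H.window_bounds hL hR).2.2.1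
  linarith [H.energy_mul_length_le hL hR hW hint hy, mul_le_mul_of_nonneg_right hle hab]

end Window

lemma mul_one_sub_le_sq_of_isMaxOn {N s x : ℝ} (hQN : ∀ t ∈ Ioo l r, Q t ≤ N ^ 2)
    (hs : s ∈ Ioo l r) (hmax : IsMaxOn (fun t => v t ^ 2) (Ioo l r) s) (hsx : s ≤ x)
    (hx : x < r) : v s ^ 2 * (1 - N ^ 2 * (x - s) ^ 2) ≤ v x ^ 2 := by
  have hmem {t : ℝ} (ht : t ∈ Icc s x) : t ∈ Ioo l r := Icc_subset_Ioo hs.1 hx ht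
  have hmono₁ := monotoneOn_Icc_of_hasDerivAt (x := s) (y := x)
    (f := fun t => v t * v₁ t + N ^ 2 * v s ^ 2 * t)
    (fun t ht => ((H.hasDerivAt t (hmem ht)).mul (H.hasDerivAt' t (hmem ht))).add
      ((hasDerivAt_id t).const_mul _)) fun t ht => by
    have hQv : Q t * v t ^ 2 ≤ N ^ 2 * v s ^ 2 :=
      (mul_le_mul_of_nonneg_right (hQN t (hmem ht)) (sq_nonneg _)).trans
        (mul_le_mul_of_nonneg_left (hmax (hmem ht)) (sq_nonneg N))
    nlinarith [sq_nonneg (v₁ t)]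
  have hmono₂ := monotoneOn_Icc_of_hasDerivAt (x := s) (y := x)
    (f := fun t => v t ^ 2 + N ^ 2 * v s ^ 2 * (t - s) ^ 2)
    (fun t ht => (H.hasDerivAt_sq (hmem ht)).add
      ((((hasDerivAt_id t).sub_const s).pow 2).const_mul _)) fun t ht => by
    have := hmono₁ (left_mem_Icc.2 hsx) ht ht.1
    simp only [H.mul_deriv_eq_zero_of_isMaxOn hs hmax] at this
    norm_num
    linarith
  have := hmono₂ (left_mem_Icc.2 hsx) (right_mem_Icc.2 hsx) hsx
  simp only [sub_self] at this
  linarith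

lemma sq_le_of_isMaxOn_left {N s : ℝ} (hQN : ∀ t ∈ Ioo l r, Q t ≤ N ^ 2) (hN : 0 < N)
    (hlen : 1 < N * (r - l)) (hv : ContinuousOn v (Icc l r)) (hint : ∫ t in l..r, v t ^ 2 ≤ 1)
    (hs : s ∈ Ioo l r) (hmax : IsMaxOn (fun t => v t ^ 2) (Ioo l r) s) (hmid : s ≤ (l + r) / 2) :
    v s ^ 2 ≤ 8 / 3 * N := by
  set x := s + 1 / (2 * N) with hx
  have hxs : N * (x - s) = 1 / 2 := by rw [hx]; field_simp; ring
  have hsx : s ≤ x := by rw [hx]; exact le_add_of_nonneg_right (by positivity)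
  have hxr : x < r := by nlinarith
  have hcont : ContinuousOn (fun t => v t ^ 2) (Icc l r) := hv.pow 2
  have hle : ∫ _ in s..x, 3 / 4 * v s ^ 2 ≤ ∫ t in s..x, v t ^ 2 := by
    refine intervalIntegral.integral_mono_on hsx (by simp)
      ((hcont.mono (Icc_subset_Icc hs.1.le hxr.le)).intervalIntegrable_of_Icc hsx)
      fun t ht => ?_
    have hNt : N * (t - s) ≤ 1 / 2 := hxs ▸ by gcongr; exact ht.2
    have hNt₀ : 0 ≤ N * (t - s) := mul_nonneg hN.le (sub_nonneg.2 ht.1)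
    have := H.mul_one_sub_le_sq_of_isMaxOn hQN hs hmax ht.1 (ht.2.trans_lt hxr)
    nlinarith [mul_le_mul hNt hNt hNt₀ (by norm_num), sq_nonneg (v s)]
  have hle' : ∫ t in s..x, v t ^ 2 ≤ ∫ t in l..r, v t ^ 2 :=
    intervalIntegral.integral_mono_interval hs.1.le hsx hxr.le
      (Filter.Eventually.of_forall fun t => sq_nonneg (v t))
      (hcont.intervalIntegrable_of_Icc (hs.1.trans hs.2).le)
  rw [intervalIntegral.integral_const, smul_eq_mul] at hle
  nlinarith

lemma sq_le_of_isMaxOn {N s : ℝ} (hQN : ∀ t ∈ Ioo l r, Q t ≤ N ^ 2) (hN : 0 < N)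
    (hlen : 1 < N * (r - l)) (hv : ContinuousOn v (Icc l r)) (hint : ∫ t in l..r, v t ^ 2 ≤ 1)
    (hs : s ∈ Ioo l r) (hmax : IsMaxOn (fun t => v t ^ 2) (Ioo l r) s) :
    v s ^ 2 ≤ 8 / 3 * N := by
  rcases le_total s ((l + r) / 2) with hmid | hmid
  · exact H.sq_le_of_isMaxOn_left hQN hN hlen hv hint hs hmax hmid
  · have hmem {t : ℝ} (ht : t ∈ Ioo l r) : l + r - t ∈ Ioo l r :=
      ⟨by linarith [ht.2], by linarith [ht.1]⟩
    have := H.reflect.sq_le_of_isMaxOn_left (fun t ht => hQN _ (hmem ht)) hN hlen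
      (hv.comp (by fun_prop) fun t ht => ⟨by linarith [ht.2], by linarith [ht.1]⟩)
      (by rw [intervalIntegral.integral_comp_sub_left (fun t => v t ^ 2)]; simpa using hint)
      (hmem hs)
      (fun t ht => by simpa using hmax (hmem ht)) (by linarith)
    simpa using this

end IsConcaveOscillator

lemma sq_le_of_forall_isMaxOn {v : ℝ → ℝ} {l r K : ℝ} (hv : ContinuousOn v (Icc l r))
    (hl : v l = 0) (hr : v r = 0) (hK : 0 ≤ K)
    (hmax : ∀ s ∈ Ioo l r, IsMaxOn (fun t => v t ^ 2) (Ioo l r) s → v s ^ 2 ≤ K) {t : ℝ}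
    (ht : t ∈ Icc l r) : v t ^ 2 ≤ K := by
  obtain ⟨s, hs, hs_max⟩ := isCompact_Icc.exists_isMaxOn ⟨t, ht⟩ (hv.pow 2)
  refine (hs_max ht).trans ?_
  rcases hs.1.eq_or_lt with rfl | hls
  · simpa [hl] using hK
  rcases hs.2.eq_or_lt with rfl | hsr
  · simpa [hr] using hK
  exact hmax s ⟨hls, hsr⟩ (hs_max.on_subset Ioo_subset_Icc_self)

/-! ### The Liouville form of Jacobi polynomials -/

section LiouvilleForm

variable {A B N m₁ m₂ θ : ℝ} {n : ℕ}

/-- The potential `N² - m₁ / (4 sin² (θ/2)) - m₂ / (4 cos² (θ/2))`. -/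
def liouvillePotential (N m₁ m₂ θ : ℝ) : ℝ :=
  N ^ 2 - m₁ / (2 * (1 - cos θ)) - m₂ / (2 * (1 + cos θ))

/-- The first derivative of `liouvillePotential N m₁ m₂`. -/
def liouvillePotentialDeriv (m₁ m₂ θ : ℝ) : ℝ :=
  m₁ * (sin θ / (2 * (1 - cos θ) ^ 2)) - m₂ * (sin θ / (2 * (1 + cos θ) ^ 2))

/-- The second derivative of `liouvillePotential N m₁ m₂`. -/
def liouvillePotentialDeriv₂ (m₁ m₂ θ : ℝ) : ℝ :=
  -(m₁ * ((2 + cos θ) / (2 * (1 - cos θ) ^ 2))) - m₂ * ((2 - cos θ) / (2 * (1 + cos θ) ^ 2))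

lemma one_sub_cos_pos (hθ : θ ∈ Ioo 0 π) : 0 < 1 - cos θ := by
  have := strictAntiOn_cos (left_mem_Icc.2 pi_pos.le) (Ioo_subset_Icc_self hθ) hθ.1
  rw [cos_zero] at this
  linarith

lemma one_add_cos_pos (hθ : θ ∈ Ioo 0 π) : 0 < 1 + cos θ := by
  have := strictAntiOn_cos (Ioo_subset_Icc_self hθ) (right_mem_Icc.2 pi_pos.le) hθ.2
  rw [cos_pi] at this
  linarith

lemma hasDerivAt_one_sub_cos (θ : ℝ) : HasDerivAt (fun θ => 1 - cos θ) (sin θ) θ := by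
  simpa using (hasDerivAt_cos θ).const_sub 1

lemma hasDerivAt_one_add_cos (θ : ℝ) : HasDerivAt (fun θ => 1 + cos θ) (-sin θ) θ :=
  (hasDerivAt_cos θ).const_add 1

lemma hasDerivAt_liouvillePotential (N m₁ m₂ : ℝ) (hθ : θ ∈ Ioo 0 π) :
    HasDerivAt (liouvillePotential N m₁ m₂) (liouvillePotentialDeriv m₁ m₂ θ) θ := by
  have h₁ := one_sub_cos_pos hθ
  have h₂ := one_add_cos_pos hθ
  refine ((((hasDerivAt_const θ m₁).div ((hasDerivAt_one_sub_cos θ).const_mul 2)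
    (by positivity)).const_sub (N ^ 2)).sub ((hasDerivAt_const θ m₂).div
      ((hasDerivAt_one_add_cos θ).const_mul 2) (by positivity))).congr_deriv ?_
  rw [liouvillePotentialDeriv]
  field_simp
  ring

lemma hasDerivAt_liouvillePotentialDeriv (m₁ m₂ : ℝ) (hθ : θ ∈ Ioo 0 π) :
    HasDerivAt (liouvillePotentialDeriv m₁ m₂) (liouvillePotentialDeriv₂ m₁ m₂ θ) θ := by
  have h₁ := one_sub_cos_pos hθ
  have h₂ := one_add_cos_pos hθ
  have hsin := sin_sq_add_cos_sq θ
  refine ((((hasDerivAt_sin θ).div (((hasDerivAt_one_sub_cos θ).pow 2).const_mul 2)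
    (by simp [h₁.ne'])).const_mul m₁).sub (((hasDerivAt_sin θ).div
      (((hasDerivAt_one_add_cos θ).pow 2).const_mul 2)
        (by simp [h₂.ne'])).const_mul m₂)).congr_deriv
    ?_
  simp only [Pi.pow_apply, liouvillePotentialDeriv₂]
  push_cast
  have e₁ : (cos θ * (2 * (1 - cos θ) ^ 2) - sin θ * (2 * (2 * (1 - cos θ) ^ (2 - 1) * sin θ))) /
      (2 * (1 - cos θ) ^ 2) ^ 2 = -((2 + cos θ) / (2 * (1 - cos θ) ^ 2)) := by
    field_simp
    linear_combination -2 * (1 - cos θ) * hsin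
  have e₂ : (cos θ * (2 * (1 + cos θ) ^ 2) - sin θ * (2 * (2 * (1 + cos θ) ^ (2 - 1) * -sin θ))) /
      (2 * (1 + cos θ) ^ 2) ^ 2 = (2 - cos θ) / (2 * (1 + cos θ) ^ 2) := by
    field_simp
    linear_combination 2 * (1 + cos θ) * hsin
  rw [e₁, e₂]
  ring

lemma liouvillePotentialDeriv₂_nonpos (hm₁ : 0 ≤ m₁) (hm₂ : 0 ≤ m₂) (θ : ℝ) :
    liouvillePotentialDeriv₂ m₁ m₂ θ ≤ 0 := by
  have h₁ : 0 ≤ 2 + cos θ := by linarith [neg_one_le_cos θ]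
  have h₂ : 0 ≤ 2 - cos θ := by linarith [cos_le_one θ]
  have := mul_nonneg hm₁ (div_nonneg h₁ (by positivity : 0 ≤ 2 * (1 - cos θ) ^ 2))
  have := mul_nonneg hm₂ (div_nonneg h₂ (by positivity : 0 ≤ 2 * (1 + cos θ) ^ 2))
  rw [liouvillePotentialDeriv₂]
  linarith

lemma isConcavePotential_liouvillePotential (N : ℝ) (hm₁ : 0 ≤ m₁) (hm₂ : 0 ≤ m₂) :
    IsConcavePotential 0 π (liouvillePotential N m₁ m₂) (liouvillePotentialDeriv m₁ m₂)
      (liouvillePotentialDeriv₂ m₁ m₂) where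
  hasDerivAt_potential _ ht := hasDerivAt_liouvillePotential N m₁ m₂ ht
  hasDerivAt_potential' _ ht := hasDerivAt_liouvillePotentialDeriv m₁ m₂ ht
  potential''_nonpos t _ := liouvillePotentialDeriv₂_nonpos hm₁ hm₂ t

lemma liouvillePotential_le_sq (N : ℝ) (hm₁ : 0 ≤ m₁) (hm₂ : 0 ≤ m₂) (θ : ℝ) :
    liouvillePotential N m₁ m₂ θ ≤ N ^ 2 := by
  have := div_nonneg hm₁ (by linarith [cos_le_one θ] : 0 ≤ 2 * (1 - cos θ))
  have := div_nonneg hm₂ (by linarith [neg_one_le_cos θ] : 0 ≤ 2 * (1 + cos θ))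
  rw [liouvillePotential]
  linarith

lemma liouvillePotential_pi_sub (N m₁ m₂ θ : ℝ) :
    liouvillePotential N m₁ m₂ (π - θ) = liouvillePotential N m₂ m₁ θ := by
  rw [liouvillePotential, liouvillePotential, cos_pi_sub, sub_neg_eq_add, ← sub_eq_add_neg]
  ring

lemma neg_liouvillePotentialDeriv_pi_sub (m₁ m₂ θ : ℝ) :
    -liouvillePotentialDeriv m₁ m₂ (π - θ) = liouvillePotentialDeriv m₂ m₁ θ := by
  rw [liouvillePotentialDeriv, liouvillePotentialDeriv, cos_pi_sub, sin_pi_sub, sub_neg_eq_add,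
    ← sub_eq_add_neg]
  ring

/-- The factor that removes the first-order term from Jacobi's differential equation in the
variable `θ = arccos x`. -/
def liouvilleFactor (A B θ : ℝ) : ℝ :=
  (1 - cos θ) ^ (A / 2 + 1 / 4) * (1 + cos θ) ^ (B / 2 + 1 / 4)

/-- The logarithmic derivative of `liouvilleFactor A B`. -/
def liouvilleFactorLogDeriv (A B θ : ℝ) : ℝ :=
  (A / 2 + 1 / 4) * (sin θ / (1 - cos θ)) - (B / 2 + 1 / 4) * (sin θ / (1 + cos θ))

/-- The Liouville form of the orthonormal Jacobi polynomial: a solution of `v'' = -Q v` for the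
potential `Q = liouvillePotential (n + (A + B + 1) / 2) (A² - 1/4) (B² - 1/4)`. -/
def jacobiLiouville (A B : ℝ) (n : ℕ) (θ : ℝ) : ℝ :=
  liouvilleFactor A B θ * jacobiP A B n (cos θ)

/-- The derivative of `jacobiLiouville A B n`. -/
def jacobiLiouvilleDeriv (A B : ℝ) (n : ℕ) (θ : ℝ) : ℝ :=
  liouvilleFactor A B θ * (liouvilleFactorLogDeriv A B θ * jacobiP A B n (cos θ) -
    sin θ * (jacobiNormalization A B n * (jacobiPoly A B n).derivative.eval (cos θ)))

lemma hasDerivAt_liouvilleFactor (A B : ℝ) (hθ : θ ∈ Ioo 0 π) :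
    HasDerivAt (liouvilleFactor A B) (liouvilleFactor A B θ * liouvilleFactorLogDeriv A B θ) θ := by
  have h₁ := one_sub_cos_pos hθ
  have h₂ := one_add_cos_pos hθ
  refine (((hasDerivAt_one_sub_cos θ).rpow_const (p := A / 2 + 1 / 4) (Or.inl h₁.ne')).mul
    ((hasDerivAt_one_add_cos θ).rpow_const (p := B / 2 + 1 / 4) (Or.inl h₂.ne'))).congr_deriv ?_
  rw [liouvilleFactor, liouvilleFactorLogDeriv, rpow_sub_one h₁.ne', rpow_sub_one h₂.ne']
  ring

lemma hasDerivAt_liouvilleFactorLogDeriv (A B : ℝ) (hθ : θ ∈ Ioo 0 π) :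
    HasDerivAt (liouvilleFactorLogDeriv A B)
      (-((A / 2 + 1 / 4) / (1 - cos θ)) - (B / 2 + 1 / 4) / (1 + cos θ)) θ := by
  have h₁ := one_sub_cos_pos hθ
  have h₂ := one_add_cos_pos hθ
  have hsin := sin_sq_add_cos_sq θ
  refine ((((hasDerivAt_sin θ).div (hasDerivAt_one_sub_cos θ) h₁.ne').const_mul _).sub
    (((hasDerivAt_sin θ).div (hasDerivAt_one_add_cos θ) h₂.ne').const_mul _)).congr_deriv ?_
  have e₁ : (cos θ * (1 - cos θ) - sin θ * sin θ) / (1 - cos θ) ^ 2 = -(1 / (1 - cos θ)) := by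
    field_simp
    linear_combination -hsin
  have e₂ : (cos θ * (1 + cos θ) - sin θ * -sin θ) / (1 + cos θ) ^ 2 = 1 / (1 + cos θ) := by
    field_simp
    linear_combination hsin
  rw [e₁, e₂]
  ring

lemma sin_mul_liouvilleFactorLogDeriv (A B : ℝ) (hθ : θ ∈ Ioo 0 π) :
    sin θ * liouvilleFactorLogDeriv A B θ =
      (A / 2 + 1 / 4) * (1 + cos θ) - (B / 2 + 1 / 4) * (1 - cos θ) := by
  have h₁ := one_sub_cos_pos hθ
  have h₂ := one_add_cos_pos hθ
  rw [liouvilleFactorLogDeriv]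
  field_simp
  linear_combination
    2 * ((A * 2 + 1) * (1 + cos θ) - (1 - cos θ) * (B * 2 + 1)) * sin_sq_add_cos_sq θ

lemma liouvilleFactorLogDeriv_riccati (A B N : ℝ) (hθ : θ ∈ Ioo 0 π) :
    liouvilleFactorLogDeriv A B θ ^ 2 -
        ((A / 2 + 1 / 4) / (1 - cos θ)) - (B / 2 + 1 / 4) / (1 + cos θ) =
      N ^ 2 - ((A + B + 1) / 2) ^ 2 -
        liouvillePotential N (A ^ 2 - 1 / 4) (B ^ 2 - 1 / 4) θ := by
  have h₁ := one_sub_cos_pos hθ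
  have h₂ := one_add_cos_pos hθ
  have hsin : sin θ ^ 2 = (1 - cos θ) * (1 + cos θ) := by
    linear_combination sin_sq_add_cos_sq θ
  have hsq : liouvilleFactorLogDeriv A B θ ^ 2 =
      sin θ ^ 2 * ((A / 2 + 1 / 4) / (1 - cos θ) - (B / 2 + 1 / 4) / (1 + cos θ)) ^ 2 := by
    rw [liouvilleFactorLogDeriv]
    ring
  rw [hsq, hsin, liouvillePotential]
  field_simp
  ring

open Polynomial in
lemma hasDerivAt_eval_cos (P : ℝ[X]) (θ : ℝ) :
    HasDerivAt (fun θ => P.eval (cos θ)) (-sin θ * P.derivative.eval (cos θ)) θ :=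
  ((P.hasDerivAt (cos θ)).comp θ (hasDerivAt_cos θ)).congr_deriv (by ring)

lemma hasDerivAt_jacobiLiouville (A B : ℝ) (n : ℕ) (hθ : θ ∈ Ioo 0 π) :
    HasDerivAt (jacobiLiouville A B n) (jacobiLiouvilleDeriv A B n θ) θ := by
  have hP := (hasDerivAt_eval_cos (jacobiPoly A B n) θ).const_mul (jacobiNormalization A B n)
  simp only [← jacobiP_eq_normalization_mul] at hP
  refine ((hasDerivAt_liouvilleFactor A B hθ).mul hP).congr_deriv ?_
  rw [jacobiLiouvilleDeriv]
  ring

lemma hasDerivAt_jacobiLiouvilleDeriv (hA : 0 ≤ A) (hB : 0 ≤ B) (n : ℕ) (hθ : θ ∈ Ioo 0 π) :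
    HasDerivAt (jacobiLiouvilleDeriv A B n)
      (-(liouvillePotential (n + (A + B + 1) / 2) (A ^ 2 - 1 / 4) (B ^ 2 - 1 / 4) θ *
        jacobiLiouville A B n θ)) θ := by
  have hP := (hasDerivAt_eval_cos (jacobiPoly A B n) θ).const_mul (jacobiNormalization A B n)
  simp only [← jacobiP_eq_normalization_mul] at hP
  refine ((hasDerivAt_liouvilleFactor A B hθ).mul
    (((hasDerivAt_liouvilleFactorLogDeriv A B hθ).mul hP).sub ((hasDerivAt_sin θ).mul
      ((hasDerivAt_eval_cos (jacobiPoly A B n).derivative θ).const_mul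
        (jacobiNormalization A B n))))).congr_deriv ?_
  have hode := jacobiPoly_ode hA hB n (cos θ)
  have hlog := sin_mul_liouvilleFactorLogDeriv A B hθ
  have hriccati := liouvilleFactorLogDeriv_riccati A B (n + (A + B + 1) / 2) hθ
  simp only [Pi.mul_apply, Pi.sub_apply, jacobiLiouville, jacobiP_eq_normalization_mul]
  generalize liouvilleFactorLogDeriv A B θ = L at *
  generalize (jacobiPoly A B n).eval (cos θ) = p₀ at *
  generalize (jacobiPoly A B n).derivative.eval (cos θ) = p₁ at *
  generalize (jacobiPoly A B n).derivative.derivative.eval (cos θ) = p₂ at *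
  linear_combination (liouvilleFactor A B θ * jacobiNormalization A B n) *
    (hode + p₂ * sin_sq_add_cos_sq θ - 2 * p₁ * hlog + p₀ * hriccati)

lemma isConcaveOscillator_jacobiLiouville (hA : 1 / 2 ≤ A) (hB : 1 / 2 ≤ B) (n : ℕ) :
    IsConcaveOscillator 0 π
      (liouvillePotential (n + (A + B + 1) / 2) (A ^ 2 - 1 / 4) (B ^ 2 - 1 / 4))
      (liouvillePotentialDeriv (A ^ 2 - 1 / 4) (B ^ 2 - 1 / 4))
      (liouvillePotentialDeriv₂ (A ^ 2 - 1 / 4) (B ^ 2 - 1 / 4))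
      (jacobiLiouville A B n) (jacobiLiouvilleDeriv A B n) where
  toIsConcavePotential := isConcavePotential_liouvillePotential _ (by nlinarith) (by nlinarith)
  hasDerivAt _ ht := hasDerivAt_jacobiLiouville A B n ht
  hasDerivAt' _ ht := hasDerivAt_jacobiLiouvilleDeriv (by linarith) (by linarith) n ht

lemma jacobiLiouville_sq (A B : ℝ) (n : ℕ) (θ : ℝ) :
    jacobiLiouville A B n θ ^ 2 =
      jacobiWeight (A + 1 / 2) (B + 1 / 2) (cos θ) * jacobiP A B n (cos θ) ^ 2 := by
  have h₁ : 0 ≤ 1 - cos θ := by linarith [cos_le_one θ]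
  have h₂ : 0 ≤ 1 + cos θ := by linarith [neg_one_le_cos θ]
  rw [jacobiLiouville, liouvilleFactor, jacobiWeight, mul_pow, mul_pow, ← rpow_mul_natCast h₁,
    ← rpow_mul_natCast h₂]
  congr 3 <;> push_cast <;> ring

lemma continuous_jacobiLiouville (hA : 0 ≤ A) (hB : 0 ≤ B) (n : ℕ) :
    Continuous (jacobiLiouville A B n) := by
  have h₁ : Continuous fun θ => (1 - cos θ) ^ (A / 2 + 1 / 4) :=
    (continuous_const.sub continuous_cos).rpow_const fun _ => Or.inr (by positivity)
  have h₂ : Continuous fun θ => (1 + cos θ) ^ (B / 2 + 1 / 4) :=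
    (continuous_const.add continuous_cos).rpow_const fun _ => Or.inr (by positivity)
  have hP : Continuous fun θ => jacobiP A B n (cos θ) := by
    simp only [jacobiP_eq_normalization_mul]
    fun_prop
  exact (h₁.mul h₂).mul hP

lemma jacobiLiouville_zero (hA : 0 ≤ A) (B : ℝ) (n : ℕ) : jacobiLiouville A B n 0 = 0 := by
  rw [jacobiLiouville, liouvilleFactor, cos_zero, sub_self, zero_rpow (by positivity)]
  ring

lemma jacobiLiouville_pi (A : ℝ) (hB : 0 ≤ B) (n : ℕ) : jacobiLiouville A B n π = 0 := by
  rw [jacobiLiouville, liouvilleFactor, cos_pi, add_neg_cancel, zero_rpow (by positivity)]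
  ring

lemma integral_jacobiLiouville_sq (hA : 0 ≤ A) (hB : 0 ≤ B) (n : ℕ) :
    ∫ θ in (0 : ℝ)..π, jacobiLiouville A B n θ ^ 2 = 1 := by
  let g : ℝ → ℝ := fun x => jacobiP A B n x ^ 2 * jacobiWeight A B x
  have hg_eq (x : ℝ) : g x = jacobiNormalization A B n ^ 2 *
      ((jacobiPoly A B n).eval x ^ 2 * jacobiWeight A B x) := by
    simp only [g, jacobiP_eq_normalization_mul]
    ring
  have hg : Continuous g := by
    have := continuous_jacobiWeight hA hB
    simp only [funext hg_eq]
    fun_prop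
  have hint : ∫ x in (-1 : ℝ)..1, g x = 1 := by
    simp only [hg_eq, intervalIntegral.integral_const_mul,
      jacobiNormalization_sq_mul_integral n hA hB]
  have hsubst := intervalIntegral.integral_comp_mul_deriv (a := 0) (b := π)
    (fun x _ => hasDerivAt_cos x) continuous_sin.neg.continuousOn hg
  rw [cos_zero, cos_pi, intervalIntegral.integral_symm (-1) 1, hint] at hsubst
  rw [← neg_neg (1 : ℝ), ← hsubst, ← intervalIntegral.integral_neg]
  refine intervalIntegral.integral_congr fun θ hθ => ?_
  rw [uIcc_of_le pi_pos.le] at hθ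
  have h₁ : 0 ≤ 1 - cos θ := by linarith [cos_le_one θ]
  have h₂ : 0 ≤ 1 + cos θ := by linarith [neg_one_le_cos θ]
  have hsin : sin θ = (1 - cos θ) ^ (1 / 2 : ℝ) * (1 + cos θ) ^ (1 / 2 : ℝ) := by
    rw [← mul_rpow h₁ h₂, ← sqrt_eq_rpow, ← sqrt_sq (sin_nonneg_of_nonneg_of_le_pi hθ.1 hθ.2),
      sin_sq]
    ring_nf
  simp only [jacobiLiouville_sq, jacobiWeight, Function.comp_apply, g]
  rw [rpow_add_of_nonneg h₁ hA (by norm_num), rpow_add_of_nonneg h₂ hB (by norm_num), hsin]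
  ring

end LiouvilleForm

section JacobiWindow

variable {A B N m₁ m₂ : ℝ} {n : ℕ}

lemma one_sub_cos_two_mul_arctan (t : ℝ) : 1 - cos (2 * arctan t) = 2 * t ^ 2 / (1 + t ^ 2) := by
  rw [cos_two_mul, cos_sq_arctan]
  field_simp
  ring

lemma one_add_cos_two_mul_arctan (t : ℝ) : 1 + cos (2 * arctan t) = 2 / (1 + t ^ 2) := by
  rw [cos_two_mul, cos_sq_arctan]
  ring

lemma sin_two_mul_arctan (t : ℝ) : sin (2 * arctan t) = 2 * t / (1 + t ^ 2) := by
  have : 0 ≤ 1 + t ^ 2 := by positivity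
  rw [sin_two_mul, sin_arctan, cos_arctan, mul_assoc, div_mul_div_comm, mul_one,
    mul_self_sqrt this, mul_div_assoc]

lemma two_mul_arctan_mem_Ioo {t : ℝ} (ht : 0 < t) : 2 * arctan t ∈ Ioo 0 π :=
  ⟨by linarith [arctan_pos.2 ht], by linarith [arctan_lt_pi_div_two t]⟩

lemma exists_eq_two_mul_arctan {θ : ℝ} (hθ : θ ∈ Ioo 0 π) : ∃ t, 0 < t ∧ θ = 2 * arctan t := by
  refine ⟨tan (θ / 2), tan_pos_of_pos_of_lt_pi_div_two (by linarith [hθ.1]) (by linarith [hθ.2]),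
    ?_⟩
  rw [arctan_tan (by linarith [hθ.1, pi_pos]) (by linarith [hθ.2])]
  ring

lemma liouvillePotential_two_mul_arctan (N m₁ m₂ : ℝ) {t : ℝ} (ht : 0 < t) :
    liouvillePotential N m₁ m₂ (2 * arctan t) =
      N ^ 2 - m₁ * (1 + t ^ 2) / (4 * t ^ 2) - m₂ * (1 + t ^ 2) / 4 := by
  rw [liouvillePotential, one_sub_cos_two_mul_arctan, one_add_cos_two_mul_arctan]
  field_simp
  ring

lemma liouvillePotentialDeriv_two_mul_arctan (m₁ m₂ : ℝ) {t : ℝ} (ht : 0 < t) :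
    liouvillePotentialDeriv m₁ m₂ (2 * arctan t) = (1 + t ^ 2) * (m₁ / t ^ 3 - m₂ * t) / 4 := by
  rw [liouvillePotentialDeriv, one_sub_cos_two_mul_arctan, one_add_cos_two_mul_arctan,
    sin_two_mul_arctan]
  field_simp
  ring

lemma adiabaticity_le_one_div_hundred {Q Q₁ : ℝ → ℝ} {a : ℝ} (hQ : 0 < Q a)
    (h : 50 * Q₁ a ≤ √(Q a) ^ 3) : adiabaticity Q Q₁ a ≤ 1 / 100 := by
  rw [adiabaticity, div_le_iff₀ (by positivity)]
  linarith

/-- The potential is negative near `0`, so that there is a transition point on the left of `a`. -/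
lemma exists_liouville_transition {t : ℝ} (hm₁ : 0 < m₁) (hm₂ : 0 ≤ m₂) (hN : 0 < N) (ht : 0 < t)
    (hQ : 0 < liouvillePotential N m₁ m₂ (2 * arctan t))
    (hh : adiabaticity (liouvillePotential N m₁ m₂) (liouvillePotentialDeriv m₁ m₂)
      (2 * arctan t) ≤ 1 / 2) :
    ∃ x ∈ Ioc 0 (2 * arctan t), 0 < liouvillePotential N m₁ m₂ x ∧
      adiabaticity (liouvillePotential N m₁ m₂) (liouvillePotentialDeriv m₁ m₂) x = 1 / 2 := by
  have hneg {τ : ℝ} (hτ : 0 < τ) (hNτ : (2 * N * τ) ^ 2 ≤ m₁) :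
      liouvillePotential N m₁ m₂ (2 * arctan τ) ≤ 0 := by
    have h₁ : N ^ 2 ≤ m₁ * (1 + τ ^ 2) / (4 * τ ^ 2) := by
      rw [le_div_iff₀ (by positivity)]
      nlinarith [mul_pos hm₁ (pow_pos hτ 2)]
    have h₂ : 0 ≤ m₂ * (1 + τ ^ 2) / 4 := by positivity
    rw [liouvillePotential_two_mul_arctan N m₁ m₂ hτ]
    linarith
  set τ := √m₁ / (2 * N) with hτ_def
  have hτ : 0 < τ := by positivity
  have hNτ : (2 * N * τ) ^ 2 = m₁ := by
    rw [hτ_def, mul_div_cancel₀ _ (by positivity), sq_sqrt hm₁.le]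
  have hτt : τ < t := by
    by_contra! htτ
    exact (hneg ht (hNτ ▸ by gcongr)).not_gt hQ
  obtain ⟨x, hx, hQx, hhx⟩ :=
    (isConcavePotential_liouvillePotential N hm₁.le hm₂).exists_transition
      (two_mul_arctan_mem_Ioo hτ).1 (by have := arctan_mono hτt.le; linarith)
      (two_mul_arctan_mem_Ioo ht).2 (hneg hτ hNτ.le) hQ hh
  exact ⟨x, ⟨(two_mul_arctan_mem_Ioo hτ).1.trans_le hx.1, hx.2⟩, hQx, hhx⟩

lemma jacobiLiouville_sq_le_of_window {xL xR a b ρ W K θ : ℝ} (hA : 1 / 2 ≤ A) (hB : 1 / 2 ≤ B)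
    (hL : IsWindowEntrance 0
      (liouvillePotential (n + (A + B + 1) / 2) (A ^ 2 - 1 / 4) (B ^ 2 - 1 / 4))
      (liouvillePotentialDeriv (A ^ 2 - 1 / 4) (B ^ 2 - 1 / 4)) xL a (b - a) ρ)
    (hR : IsWindowEntrance 0
      (liouvillePotential (n + (A + B + 1) / 2) (B ^ 2 - 1 / 4) (A ^ 2 - 1 / 4))
      (liouvillePotentialDeriv (B ^ 2 - 1 / 4) (A ^ 2 - 1 / 4)) xR (π - b) (b - a) ρ)
    (hW : ∀ t ∈ Icc a b, √(liouvillePotential (n + (A + B + 1) / 2) (A ^ 2 - 1 / 4)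
      (B ^ 2 - 1 / 4) t) ≤ W)
    (hρ : 0 < ρ) (hab : a < b) (hK : 128 / 25 * W ≤ ρ * (b - a) * K) (hθ : θ ∈ Icc 0 π) :
    jacobiLiouville A B n θ ^ 2 ≤ K := by
  have H := isConcaveOscillator_jacobiLiouville hA hB n
  have hv := continuous_jacobiLiouville (by linarith) (by linarith) n (A := A) (B := B)
  have hR' : IsWindowEntrance 0
      (fun t => liouvillePotential (n + (A + B + 1) / 2) (A ^ 2 - 1 / 4) (B ^ 2 - 1 / 4)
        (0 + π - t))
      (fun t => -liouvillePotentialDeriv (A ^ 2 - 1 / 4) (B ^ 2 - 1 / 4) (0 + π - t))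
      (0 + π - (π - xR)) (0 + π - b) (b - a) ρ := by
    simpa only [zero_add, liouvillePotential_pi_sub, neg_liouvillePotentialDeriv_pi_sub,
      sub_sub_cancel] using hR
  obtain ⟨hxR, hbR, -⟩ := H.window_bounds hL hR'
  have hint : ∫ t in a..b, jacobiLiouville A B n t ^ 2 ≤ 1 := by
    rw [← integral_jacobiLiouville_sq (by linarith : 0 ≤ A) (by linarith : 0 ≤ B) n]
    exact intervalIntegral.integral_mono_interval (hL.lt.trans_le hL.le).le hab.le
      (hbR.trans hxR.le) (Filter.Eventually.of_forall fun t => sq_nonneg _)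
      ((hv.pow 2).intervalIntegrable _ _)
  have hW₀ : 0 ≤ W := (sqrt_nonneg _).trans (hW a (left_mem_Icc.2 hab.le))
  have hρab : 0 < ρ * (b - a) := mul_pos hρ (sub_pos.2 hab)
  refine sq_le_of_forall_isMaxOn hv.continuousOn (jacobiLiouville_zero (by linarith) B n)
    (jacobiLiouville_pi A (by linarith) n) ?_ (fun s hs hmax => ?_) hθ
  · exact nonneg_of_mul_nonneg_right (hK.trans' (by positivity)) hρab
  · have := (H.mul_sq_le_of_window hL hR' hW hint hs hmax).trans hK
    exact le_of_mul_le_mul_left (by linarith) hρab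

end JacobiWindow

/-! ### The supremum of the Liouville form -/

section LargeDegree

variable {N d m₁ m₂ : ℝ}

lemma arctan_lt_self {x : ℝ} (hx : 0 < x) : arctan x < x := by
  simpa using lt_tan (arctan_pos.2 hx) (arctan_lt_pi_div_two x)

lemma liouvillePotentialDeriv_eq_sqrt_pow {θ : ℝ} (hQ : 0 < liouvillePotential N m₁ m₂ θ)
    (hh : adiabaticity (liouvillePotential N m₁ m₂) (liouvillePotentialDeriv m₁ m₂) θ = 1 / 2) :
    liouvillePotentialDeriv m₁ m₂ θ = √(liouvillePotential N m₁ m₂ θ) ^ 3 := by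
  have hS := sqrt_pos.2 hQ
  rw [adiabaticity, div_eq_iff (by positivity)] at hh
  linarith

/-- If `√Q` were smaller, then `m₁ / t²` would be comparable to `N²`, so that `Q' ≈ m₁ / (4 t³)`
would be of order `(N / d)³` and exceed `√Q³`. -/
lemma le_sqrt_liouvillePotential_of_transition {t : ℝ} (hd : 1 ≤ d) (hm₁ : 0 < m₁)
    (hm₁d : m₁ ≤ d ^ 6) (hm₂ : 0 ≤ m₂) (hm₂d : m₂ ≤ d ^ 6) (hN : 1000 * d ^ 3 ≤ N) (ht : 0 < t)
    (ht' : t ≤ 1 / 4) (hQ : 0 < liouvillePotential N m₁ m₂ (2 * arctan t))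
    (hh : adiabaticity (liouvillePotential N m₁ m₂) (liouvillePotentialDeriv m₁ m₂)
      (2 * arctan t) = 1 / 2) :
    2 / 3 * (N / d) ≤ √(liouvillePotential N m₁ m₂ (2 * arctan t)) := by
  have hd₃ : 1 ≤ d ^ 3 := one_le_pow₀ hd
  have hN₀ : 0 < N := by linarith
  have hdN : 10 ^ 6 * d ^ 6 ≤ N ^ 2 := by nlinarith
  have ht₂ : t ^ 2 ≤ 1 / 16 := by nlinarith
  by_contra! hlt
  set M := N / d with hM
  have hM₀ : 0 < M := by positivity
  have hMN : M ≤ N := div_le_self hN₀.le hd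
  have hQlt : liouvillePotential N m₁ m₂ (2 * arctan t) ≤ 4 / 9 * N ^ 2 := by
    rw [← sq_sqrt hQ.le]
    nlinarith [sqrt_nonneg (liouvillePotential N m₁ m₂ (2 * arctan t))]
  have hsing : 2 * N ^ 2 ≤ m₁ / t ^ 2 := by
    have hsplit : m₁ * (1 + t ^ 2) / (4 * t ^ 2) = m₁ / t ^ 2 / 4 + m₁ / 4 := by field_simp
    rw [liouvillePotential_two_mul_arctan N m₁ m₂ ht, hsplit] at hQlt
    nlinarith
  have hcube : 2 * M ^ 3 ≤ m₁ / t ^ 3 := by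
    refine (sq_le_sq₀ (by positivity) (by positivity)).1 ?_
    calc (2 * M ^ 3) ^ 2 = 4 * N ^ 6 / d ^ 6 := by rw [hM]; field_simp; ring
      _ ≤ (2 * N ^ 2) ^ 3 / d ^ 6 := by gcongr; nlinarith [pow_pos hN₀ 6]
      _ ≤ (m₁ / t ^ 2) ^ 3 / m₁ := by gcongr
      _ = (m₁ / t ^ 3) ^ 2 := by field_simp
  have hM₃ : 10 ^ 9 * d ^ 6 ≤ M ^ 3 := by
    rw [hM, div_pow, le_div_iff₀ (by positivity)]
    calc 10 ^ 9 * d ^ 6 * d ^ 3 = (1000 * d ^ 3) ^ 3 := by ring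
      _ ≤ N ^ 3 := by gcongr
  have hderiv : M ^ 3 * (15 / 32) ≤ liouvillePotentialDeriv m₁ m₂ (2 * arctan t) := by
    rw [liouvillePotentialDeriv_two_mul_arctan m₁ m₂ ht]
    have : 15 / 8 * M ^ 3 ≤ m₁ / t ^ 3 - m₂ * t := by nlinarith
    nlinarith [sq_nonneg t, pow_pos hM₀ 3]
  rw [liouvillePotentialDeriv_eq_sqrt_pow hQ hh] at hderiv
  have := pow_lt_pow_left₀ hlt (sqrt_nonneg _) three_ne_zero
  nlinarith [pow_pos hM₀ 3]

lemma exists_isWindowEntrance_of_large (hd : 1 ≤ d) (hm₁ : 0 < m₁) (hm₁d : m₁ ≤ d ^ 6)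
    (hm₂ : 0 ≤ m₂) (hm₂d : m₂ ≤ d ^ 6) (hN : 1000 * d ^ 3 ≤ N) :
    ∃ x, IsWindowEntrance 0 (liouvillePotential N m₁ m₂) (liouvillePotentialDeriv m₁ m₂) x
      (2 * arctan (1 / 4)) (π - 2 * (2 * arctan (1 / 4))) (2 / 3 * (N / d)) := by
  have hd₃ : 1 ≤ d ^ 3 := one_le_pow₀ hd
  have hN₀ : 0 < N := by linarith
  have hdN : 10 ^ 6 * d ^ 6 ≤ N ^ 2 := by nlinarith
  have hQ : (N / 2) ^ 2 ≤ liouvillePotential N m₁ m₂ (2 * arctan (1 / 4)) := by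
    rw [liouvillePotential_two_mul_arctan N m₁ m₂ (by norm_num)]
    norm_num
    linarith [sq_nonneg d]
  have hsqrt : N / 2 ≤ √(liouvillePotential N m₁ m₂ (2 * arctan (1 / 4))) := le_sqrt_of_sq_le hQ
  have hQ₀ := (by positivity : 0 < (N / 2) ^ 2).trans_le hQ
  have hderiv : liouvillePotentialDeriv m₁ m₂ (2 * arctan (1 / 4)) ≤ 17 * m₁ := by
    rw [liouvillePotentialDeriv_two_mul_arctan m₁ m₂ (by norm_num)]
    norm_num
    linarith
  have hadia := adiabaticity_le_one_div_hundred (Q₁ := liouvillePotentialDeriv m₁ m₂) hQ₀ <|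
    calc 50 * liouvillePotentialDeriv m₁ m₂ (2 * arctan (1 / 4)) ≤ N ^ 2 := by linarith
      _ ≤ (N / 2) ^ 3 := by nlinarith [sq_nonneg N]
      _ ≤ _ := by gcongr
  obtain ⟨x, hx, hQx, hhx⟩ :=
    exists_liouville_transition hm₁ hm₂ hN₀ (by norm_num) hQ₀ (hadia.trans (by norm_num))
  have hxπ : x ∈ Ioo 0 π :=
    ⟨hx.1, hx.2.trans_lt (two_mul_arctan_mem_Ioo (by norm_num)).2⟩
  obtain ⟨t, ht, rfl⟩ := exists_eq_two_mul_arctan hxπ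
  have ht' : t ≤ 1 / 4 := arctan_strictMono.le_iff_le.1 (by linarith [hx.2])
  refine ⟨_, hx.1, hx.2, hQx, hhx,
    le_sqrt_liouvillePotential_of_transition hd hm₁ hm₁d hm₂ hm₂d hN ht ht' hQx hhx, hadia, ?_⟩
  have hw : 2 ≤ π - 2 * (2 * arctan (1 / 4)) := by
    linarith [pi_gt_three, arctan_lt_self (x := 1 / 4) (by norm_num)]
  nlinarith

lemma jacobiLiouville_sq_le_of_large {A B θ : ℝ} {n : ℕ} (hA : 1 / 2 < A) (hB : 1 / 2 < B)
    (hd : 1 ≤ d) (hAd : A ≤ d ^ 3) (hBd : B ≤ d ^ 3) (hn : 1000 * d ^ 3 ≤ n) (hθ : θ ∈ Icc 0 π) :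
    jacobiLiouville A B n θ ^ 2 ≤ 4 * d := by
  have hm {C : ℝ} (hC : 1 / 2 < C) (hCd : C ≤ d ^ 3) :
      0 < C ^ 2 - 1 / 4 ∧ C ^ 2 - 1 / 4 ≤ d ^ 6 := by
    constructor <;> nlinarith
  obtain ⟨hmA, hmA'⟩ := hm hA hAd
  obtain ⟨hmB, hmB'⟩ := hm hB hBd
  have hN : 1000 * d ^ 3 ≤ n + (A + B + 1) / 2 := by linarith
  have hN₀ : 0 < n + (A + B + 1) / 2 := by positivity
  set a := 2 * arctan (1 / 4) with ha
  have ha' : a ≤ 1 / 2 := by linarith [arctan_lt_self (x := 1 / 4) (by norm_num)]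
  obtain ⟨xL, hL⟩ := exists_isWindowEntrance_of_large hd hmA hmA' hmB.le hmB' hN
  obtain ⟨xR, hR⟩ := exists_isWindowEntrance_of_large hd hmB hmB' hmA.le hmA' hN
  have hw : π - a - a = π - 2 * (2 * arctan (1 / 4)) := by rw [ha]; ring
  rw [← hw] at hL hR
  refine jacobiLiouville_sq_le_of_window hA.le hB.le hL (by rwa [sub_sub_cancel])
    (W := n + (A + B + 1) / 2) (fun t _ => ?_) (by positivity)
    (by linarith [pi_gt_three]) ?_ hθ
  · exact (sqrt_le_left hN₀.le).2 (liouvillePotential_le_sq _ hmA.le hmB.le t)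
  · rw [show 2 / 3 * ((n + (A + B + 1) / 2) / d) * (π - a - a) * (4 * d)
      = (n + (A + B + 1) / 2) * (8 / 3 * (π - a - a)) by field_simp; ring]
    nlinarith [pi_gt_three]

end LargeDegree

section SmallDegree

variable {A N S t α β ρ w : ℝ}

lemma liouvillePotential_sq_two_mul_arctan (N α β : ℝ) (ht : 0 < t) :
    liouvillePotential N (α ^ 2) (β ^ 2) (2 * arctan t) =
      N ^ 2 - (α + β) ^ 2 / 4 - (α / t - β * t) ^ 2 / 4 := by
  rw [liouvillePotential_two_mul_arctan N _ _ ht]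
  field_simp
  ring

lemma liouvillePotentialDeriv_sq_two_mul_arctan (α β : ℝ) (ht : 0 < t) :
    liouvillePotentialDeriv (α ^ 2) (β ^ 2) (2 * arctan t) =
      (α / t - β * t) * (α + β + α / t ^ 2 + β * t ^ 2) / 4 := by
  rw [liouvillePotentialDeriv_two_mul_arctan _ _ ht]
  field_simp
  ring

lemma exists_div_sub_mul_eq {F : ℝ} (hα : 0 < α) (hβ : 0 < β) (hF : 0 ≤ F) :
    ∃ t, 0 < t ∧ α / t - β * t = F := by
  have hs : √(F ^ 2 + 4 * α * β) ^ 2 = F ^ 2 + 4 * α * β := sq_sqrt (by positivity)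
  set s := √(F ^ 2 + 4 * α * β)
  refine ⟨2 * α / (s + F), by positivity, ?_⟩
  have : 0 < s + F := by positivity
  field_simp
  linarith

lemma liouvillePotentialDeriv_sq_le {F : ℝ} (hα : 0 < α) (hβ : 0 < β) (hF : 0 ≤ F) (ht : 0 < t)
    (htF : α / t - β * t = F) :
    liouvillePotentialDeriv (α ^ 2) (β ^ 2) (2 * arctan t) ≤
      F * (2 * α + 3 * β + F ^ 2 / α) / 4 := by
  rw [liouvillePotentialDeriv_sq_two_mul_arctan α β ht, htF]
  have hα_eq : α = F * t + β * t ^ 2 := by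
    rw [sub_eq_iff_eq_add, div_eq_iff ht.ne'] at htF
    linarith
  have hβt : β * t ^ 2 ≤ α := by linarith [mul_nonneg hF ht.le]
  have hαt : α / t ^ 2 ≤ 2 * β + F ^ 2 / α :=
    calc α / t ^ 2 = 2 * β + F ^ 2 / α - β ^ 2 * t ^ 2 / α := by
          have : (F * t) ^ 2 = (α - β * t ^ 2) ^ 2 := by rw [hα_eq]; ring
          field_simp
          linarith
      _ ≤ 2 * β + F ^ 2 / α := sub_le_self _ (by positivity)
  gcongr ?_ / 4
  exact mul_le_mul_of_nonneg_left (by linarith) hF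

lemma sq_div_le_deriv_mul_sub (hα : 0 < α) (hβ : 0 < β) (ht : 0 < t)
    (htS : α / t - β * t = S / 4) :
    S ^ 2 / 64 ≤ liouvillePotentialDeriv (α ^ 2) (β ^ 2) (2 * arctan t) *
      (2 * arctan √(α / β) - 2 * arctan t) := by
  have hc : 0 < √(α / β) := by positivity
  have hcenter : α / √(α / β) - β * √(α / β) = 0 := by
    rw [sub_eq_zero, div_eq_iff hc.ne', mul_assoc, mul_self_sqrt (by positivity)]
    field_simp
  have := (isConcavePotential_liouvillePotential 0 (sq_nonneg α) (sq_nonneg β)).le_tangent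
    (two_mul_arctan_mem_Ioo ht) (two_mul_arctan_mem_Ioo hc)
  rw [liouvillePotential_sq_two_mul_arctan 0 α β hc, liouvillePotential_sq_two_mul_arctan 0 α β ht,
    hcenter, htS] at this
  linarith

lemma exists_isWindowEntrance_of_small (hα : 3 / 4 ≤ α ^ 2) (hα₀ : 0 < α) (hβ : 0 < β)
    (hαA : α ≤ A) (hβA : β ≤ A) (hS : 0 < S) (hSN : S ^ 2 = N ^ 2 - (α + β) ^ 2 / 4)
    (hSA : 25 * A ≤ S ^ 2) (hN : 0 < N) (ht : 0 < t) (htS : α / t - β * t = S / 4)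
    (hρ : ρ ^ 3 ≤ liouvillePotentialDeriv (α ^ 2) (β ^ 2) (2 * arctan t)) (hw : 110 ≤ S * w) :
    ∃ x, IsWindowEntrance 0 (liouvillePotential N (α ^ 2) (β ^ 2))
      (liouvillePotentialDeriv (α ^ 2) (β ^ 2)) x (2 * arctan t) w ρ := by
  have H := isConcavePotential_liouvillePotential N (sq_nonneg α) (sq_nonneg β)
  have hQ : liouvillePotential N (α ^ 2) (β ^ 2) (2 * arctan t) = 63 / 64 * S ^ 2 := by
    rw [liouvillePotential_sq_two_mul_arctan N α β ht, htS]
    linarith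
  have hQ₀ : 0 < liouvillePotential N (α ^ 2) (β ^ 2) (2 * arctan t) := by rw [hQ]; positivity
  have hsqrt : 99 / 100 * S ≤ √(liouvillePotential N (α ^ 2) (β ^ 2) (2 * arctan t)) :=
    le_sqrt_of_sq_le (by rw [hQ]; nlinarith)
  have hderiv : 50 * liouvillePotentialDeriv (α ^ 2) (β ^ 2) (2 * arctan t) ≤
      (99 / 100 * S) ^ 3 := by
    have hle := liouvillePotentialDeriv_sq_le hα₀ hβ (by positivity) ht htS
    have hdiv : (S / 4) ^ 2 / α ≤ 2 / 27 * S ^ 2 := by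
      rw [div_le_iff₀ hα₀]
      nlinarith
    have hsum : 2 * α + 3 * β + (S / 4) ^ 2 / α ≤ (1 / 5 + 2 / 27) * S ^ 2 := by linarith
    nlinarith [mul_le_mul_of_nonneg_left hsum hS.le, pow_pos hS 3]
  have hadia := adiabaticity_le_one_div_hundred hQ₀ (hderiv.trans (by gcongr))
  obtain ⟨x, hx, hQx, hhx⟩ := exists_liouville_transition (by positivity) (sq_nonneg β) hN ht hQ₀
    (hadia.trans (by norm_num))
  refine ⟨x, hx.1, hx.2, hQx, hhx, ?_, hadia, by nlinarith⟩
  have hanti := H.antitoneOn_deriv ⟨hx.1, hx.2.trans_lt (two_mul_arctan_mem_Ioo ht).2⟩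
    (two_mul_arctan_mem_Ioo ht) hx.2
  rw [liouvillePotentialDeriv_eq_sqrt_pow hQx hhx] at hanti
  exact le_of_pow_le_pow_left₀ three_ne_zero (sqrt_nonneg _) (hρ.trans hanti)

end SmallDegree

section SupBound

variable {A B K θ : ℝ} {n : ℕ}

lemma arctan_inv_sqrt_div {α β : ℝ} (hα : 0 < α) (hβ : 0 < β) :
    2 * arctan √(β / α) = π - 2 * arctan √(α / β) := by
  rw [← inv_div, sqrt_inv, arctan_inv_of_pos (by positivity)]
  ring

lemma liouvillePotential_sq_le {N α β S : ℝ} (hSN : S ^ 2 = N ^ 2 - (α + β) ^ 2 / 4)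
    (hθ : θ ∈ Ioo 0 π) : liouvillePotential N (α ^ 2) (β ^ 2) θ ≤ S ^ 2 := by
  obtain ⟨t, ht, rfl⟩ := exists_eq_two_mul_arctan hθ
  rw [liouvillePotential_sq_two_mul_arctan N α β ht]
  linarith [sq_nonneg (α / t - β * t)]

lemma liouvillePotentialDeriv_sq_pos {α β t : ℝ} (hα : 0 < α) (hβ : 0 < β) (ht : 0 < t)
    (h : 0 < α / t - β * t) : 0 < liouvillePotentialDeriv (α ^ 2) (β ^ 2) (2 * arctan t) := by
  rw [liouvillePotentialDeriv_sq_two_mul_arctan α β ht]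
  positivity

lemma liouvillePotentialDeriv_sq_le_mul {α β S t : ℝ} (hα : 0 < α) (hβ : 0 < β)
    (hαA : 3 / 4 * A ^ 2 ≤ α ^ 2) (hα_le : α ≤ A) (hβ_le : β ≤ A) (hS : 0 < S)
    (hSA : S ≤ 1002 * A) (ht : 0 < t) (htS : α / t - β * t = S / 4) :
    liouvillePotentialDeriv (α ^ 2) (β ^ 2) (2 * arctan t) ≤ 5000 * (S * A) := by
  have hle := liouvillePotentialDeriv_sq_le hα hβ (by positivity) ht htS
  have hα' : 0.86 * A ≤ α := by nlinarith
  have hdiv : (S / 4) ^ 2 / α ≤ 73000 * A := by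
    rw [div_le_iff₀ hα]
    nlinarith
  have hsum : 2 * α + 3 * β + (S / 4) ^ 2 / α ≤ 73005 * A := by linarith
  nlinarith [mul_le_mul_of_nonneg_left hsum hS.le, mul_pos hS (hα.trans_le hα_le)]

/-- The window is cut off where `Q` has dropped to `63/64` of its maximum `S²`; the smaller of the
slopes at the two ends bounds both its length and the frequencies at the transition points. -/
lemma exists_windows_of_small {α β N S : ℝ} (hα : 0 < α) (hβ : 0 < β)
    (hαA : 3 / 4 * A ^ 2 ≤ α ^ 2) (hβ₁ : 3 / 4 ≤ β ^ 2) (hα_le : α ≤ A) (hβ_le : β ≤ A)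
    (hA : 1 ≤ A) (hN : 0 < N) (hS : 0 < S) (hSN : S ^ 2 = N ^ 2 - (α + β) ^ 2 / 4)
    (hSA : S ≤ 1002 * A) (hAS : 10 ^ 8 * A ≤ S ^ 2) :
    ∃ xL xR a b ρ, a < b ∧ 0 < ρ ∧ ρ ^ 3 ≤ 5000 * (S * A) ∧ S ^ 2 / 64 ≤ ρ ^ 3 * (b - a) ∧
      IsWindowEntrance 0 (liouvillePotential N (α ^ 2) (β ^ 2))
        (liouvillePotentialDeriv (α ^ 2) (β ^ 2)) xL a (b - a) ρ ∧
      IsWindowEntrance 0 (liouvillePotential N (β ^ 2) (α ^ 2))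
        (liouvillePotentialDeriv (β ^ 2) (α ^ 2)) xR (π - b) (b - a) ρ := by
  have hα₁ : 3 / 4 ≤ α ^ 2 := hαA.trans' (by nlinarith)
  obtain ⟨tL, htL, hL⟩ := exists_div_sub_mul_eq hα hβ (by positivity : 0 ≤ S / 4)
  obtain ⟨tR, htR, hR⟩ := exists_div_sub_mul_eq hβ hα (by positivity : 0 ≤ S / 4)
  have hqL := liouvillePotentialDeriv_sq_pos hα hβ htL (hL ▸ by positivity)
  have hqR := liouvillePotentialDeriv_sq_pos hβ hα htR (hR ▸ by positivity)
  have hlenL := sq_div_le_deriv_mul_sub hα hβ htL hL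
  have hlenR := sq_div_le_deriv_mul_sub hβ hα htR hR
  have hqS := liouvillePotentialDeriv_sq_le_mul hα hβ hαA hα_le hβ_le hS hSA htL hL
  rw [arctan_inv_sqrt_div hα hβ, sub_right_comm] at hlenR
  set a := 2 * arctan tL
  set b := π - 2 * arctan tR with hb
  set qL := liouvillePotentialDeriv (α ^ 2) (β ^ 2) a
  set qR := liouvillePotentialDeriv (β ^ 2) (α ^ 2) (2 * arctan tR)
  have hac : 0 < 2 * arctan √(α / β) - a :=
    (mul_pos_iff_of_pos_left hqL).1 (hlenL.trans_lt' (by positivity))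
  have hcb : 0 < b - 2 * arctan √(α / β) :=
    (mul_pos_iff_of_pos_left hqR).1 (hlenR.trans_lt' (by positivity))
  obtain ⟨ρ, hρ, hρq⟩ : ∃ ρ, 0 < ρ ∧ ρ ^ 3 = min qL qR :=
    ⟨min qL qR ^ (1 / 3 : ℝ), by positivity, by
      rw [← rpow_natCast, ← rpow_mul (by positivity)]
      norm_num⟩
  have hρS : ρ ^ 3 ≤ 5000 * (S * A) := hρq.trans_le ((min_le_left _ _).trans hqS)
  have hlen : S ^ 2 / 64 ≤ ρ ^ 3 * (b - a) := by
    rw [hρq]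
    rcases min_choice qL qR with h | h <;> rw [h]
    · exact hlenL.trans (mul_le_mul_of_nonneg_left (by linarith) hqL.le)
    · exact hlenR.trans (mul_le_mul_of_nonneg_left (by linarith) hqR.le)
  have hw : 110 ≤ S * (b - a) := by
    have : S ^ 2 / 64 ≤ 5000 * (S * A) * (b - a) :=
      hlen.trans (mul_le_mul_of_nonneg_right hρS (by linarith))
    refine le_of_mul_le_mul_left ?_ (by linarith : 0 < A)
    linarith
  obtain ⟨xL, hxL⟩ := exists_isWindowEntrance_of_small hα₁ hα hβ hα_le hβ_le hS hSN
    (by linarith) hN htL hL (hρq.trans_le (min_le_left _ _)) hw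
  obtain ⟨xR, hxR⟩ := exists_isWindowEntrance_of_small hβ₁ hβ hα hβ_le hα_le hS
    (by rw [hSN, add_comm]) (by linarith) hN htR hR (hρq.trans_le (min_le_right _ _)) hw
  refine ⟨xL, xR, a, b, ρ, by linarith, hρ, hρS, hlen, hxL, ?_⟩
  rwa [hb, sub_sub_cancel]

lemma mul_le_of_window_width {S ρ w : ℝ} (hS : 0 < S) (hρ : 0 < ρ) (hK : 0 < K)
    (hρS : ρ ^ 3 ≤ 5000 * (S * A)) (hw : S ^ 2 / 64 ≤ ρ ^ 3 * w)
    (hKS : 10 ^ 15 * A ^ 2 ≤ S * K ^ 3) :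
    128 / 25 * S ≤ ρ * w * K := by
  have hρK : 328 * ρ ^ 2 ≤ S * K := by
    refine le_of_pow_le_pow_left₀ three_ne_zero (by positivity) ?_
    calc (328 * ρ ^ 2) ^ 3 = 328 ^ 3 * (ρ ^ 3) ^ 2 := by ring
      _ ≤ 328 ^ 3 * (5000 * (S * A)) ^ 2 := by gcongr
      _ = 328 ^ 3 * 5000 ^ 2 * (S ^ 2 * A ^ 2) := by ring
      _ ≤ 10 ^ 15 * (S ^ 2 * A ^ 2) := by gcongr; norm_num
      _ = S ^ 2 * (10 ^ 15 * A ^ 2) := by ring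
      _ ≤ S ^ 2 * (S * K ^ 3) := by gcongr
      _ = (S * K) ^ 3 := by ring
  refine le_of_mul_le_mul_left ?_ (by positivity : 0 < 64 * ρ ^ 2)
  calc 64 * ρ ^ 2 * (128 / 25 * S) ≤ S * K * S := by nlinarith [mul_pos hS (pow_pos hρ 2)]
    _ = 64 * (S ^ 2 / 64) * K := by ring
    _ ≤ 64 * (ρ ^ 3 * w) * K := by gcongr
    _ = 64 * ρ ^ 2 * (ρ * w * K) := by ring

lemma jacobiLiouville_sq_le_of_small (hB : 1 ≤ B) (hBA : B ≤ A) (hn : 10 ^ 8 ≤ n)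
    (hnA : n ≤ 1000 * A) (hK : 0 < K) (hKn : 10 ^ 30 * A ^ 3 ≤ n * K ^ 6) (hθ : θ ∈ Icc 0 π) :
    jacobiLiouville A B n θ ^ 2 ≤ K := by
  have hn' : (10 : ℝ) ^ 8 ≤ n := mod_cast hn
  obtain ⟨α, hα, hαA⟩ : ∃ α, 0 < α ∧ α ^ 2 = A ^ 2 - 1 / 4 :=
    ⟨√(A ^ 2 - 1 / 4), sqrt_pos.2 (by nlinarith), sq_sqrt (by nlinarith)⟩
  obtain ⟨β, hβ, hβB⟩ : ∃ β, 0 < β ∧ β ^ 2 = B ^ 2 - 1 / 4 :=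
    ⟨√(B ^ 2 - 1 / 4), sqrt_pos.2 (by nlinarith), sq_sqrt (by nlinarith)⟩
  have hα_le : α ≤ A := by nlinarith
  have hβ_le : β ≤ B := by nlinarith
  obtain ⟨N, hN⟩ : ∃ N : ℝ, N = n + (A + B + 1) / 2 := ⟨_, rfl⟩
  have hnA₀ : 0 < n * A := mul_pos (by linarith) (by linarith)
  have hnAN : n * A ≤ N ^ 2 - (α + β) ^ 2 / 4 := by
    have : (α + β) ^ 2 ≤ (A + B) ^ 2 := by gcongr
    rw [hN]
    nlinarith
  obtain ⟨S, hS, hSN⟩ : ∃ S, 0 < S ∧ S ^ 2 = N ^ 2 - (α + β) ^ 2 / 4 :=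
    ⟨√(N ^ 2 - (α + β) ^ 2 / 4), sqrt_pos.2 (hnA₀.trans_le hnAN),
      sq_sqrt (hnA₀.le.trans hnAN)⟩
  have hSA : S ≤ 1002 * A := by nlinarith
  have hKS : 10 ^ 15 * A ^ 2 ≤ S * K ^ 3 := by
    refine (sq_le_sq₀ (by positivity) (by positivity)).1 ?_
    calc (10 ^ 15 * A ^ 2) ^ 2 = A * (10 ^ 30 * A ^ 3) := by ring
      _ ≤ A * (n * K ^ 6) := by gcongr; linarith
      _ = n * A * K ^ 6 := by ring
      _ ≤ S ^ 2 * K ^ 6 := by gcongr; rwa [hSN]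
      _ = (S * K ^ 3) ^ 2 := by ring
  obtain ⟨xL, xR, a, b, ρ, hab, hρ, hρS, hlen, hxL, hxR⟩ :=
    exists_windows_of_small hα hβ (by rw [hαA]; nlinarith) (by rw [hβB]; nlinarith) hα_le
      (hβ_le.trans hBA) (hB.trans hBA) (by rw [hN]; linarith) hS hSN hSA
      ((mul_le_mul_of_nonneg_right hn' (by linarith)).trans (hnAN.trans_eq hSN.symm))
  rw [hαA, hβB, hN] at hxL hxR
  refine jacobiLiouville_sq_le_of_window (by linarith) (by linarith) hxL hxR (W := S)
    (fun t ht => sqrt_le_iff.2 ⟨hS.le, ?_⟩) hρ hab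
    (mul_le_of_window_width hS hρ hK hρS hlen hKS) hθ
  rw [← hαA, ← hβB, ← hN]
  exact liouvillePotential_sq_le hSN ⟨by linarith [hxL.lt, hxL.le, ht.1],
    by linarith [hxR.lt, hxR.le, ht.2]⟩

lemma jacobiLiouville_sq_le_mul_degree (hA : 1 / 2 ≤ A) (hB : 1 / 2 ≤ B) (hθ : θ ∈ Icc 0 π) :
    jacobiLiouville A B n θ ^ 2 ≤ 8 / 3 * (n + (A + B + 1) / 2) := by
  have hv := continuous_jacobiLiouville (by linarith) (by linarith) n (A := A) (B := B)
  refine sq_le_of_forall_isMaxOn hv.continuousOn (jacobiLiouville_zero (by linarith) B n)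
    (jacobiLiouville_pi A (by linarith) n) (by positivity) (fun s hs hmax => ?_) hθ
  refine (isConcaveOscillator_jacobiLiouville hA hB n).sq_le_of_isMaxOn
    (fun t _ => liouvillePotential_le_sq _ (by nlinarith) (by nlinarith) t) (by positivity) ?_
    hv.continuousOn (integral_jacobiLiouville_sq (by linarith) (by linarith) n).le hs hmax
  nlinarith [pi_gt_three, (n.cast_nonneg : (0 : ℝ) ≤ n)]

theorem jacobiLiouville_sq_le {X : ℝ} (hB : 1 ≤ B) (hBA : B ≤ A) (hX : 1 ≤ X)
    (hnX : 10 ^ 12 * A ≤ n * X) (hθ : θ ∈ Icc 0 π) :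
    jacobiLiouville A B n θ ^ 2 ≤ 4 * A ^ (1 / 3 : ℝ) * X ^ 2 := by
  have hA : 1 ≤ A := hB.trans hBA
  obtain ⟨d, hd, hd_eq⟩ : ∃ d, 1 ≤ d ∧ A ^ (1 / 3 : ℝ) = d := ⟨_, one_le_rpow hA (by norm_num), rfl⟩
  have hdA : d ^ 3 = A := by
    rw [← hd_eq, ← rpow_natCast, ← rpow_mul (by linarith)]
    norm_num
  have hX₂ : 1 ≤ X ^ 2 := one_le_pow₀ hX
  rw [hd_eq]
  rcases le_total (1000 * A) n with hnA | hnA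
  · refine (jacobiLiouville_sq_le_of_large (by linarith) (by linarith) hd hdA.ge
      (hBA.trans_eq hdA.symm) (hdA ▸ hnA) hθ).trans ?_
    exact le_mul_of_one_le_right (by linarith) hX₂
  have hX₉ : 10 ^ 9 ≤ X := by nlinarith
  rcases le_total (10 ^ 8) n with hn | hn
  · refine jacobiLiouville_sq_le_of_small hB hBA hn hnA (by positivity) ?_ hθ
    have hX₁₁ : (10 : ℝ) ^ 30 ≤ X ^ 11 := (by norm_num : (10 : ℝ) ^ 30 ≤ (10 ^ 9) ^ 11).trans
      (pow_le_pow_left₀ (by norm_num) hX₉ 11)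
    calc 10 ^ 30 * A ^ 3 = A * (10 ^ 30 * A ^ 2) := by ring
      _ ≤ (n * X) * (X ^ 11 * A ^ 2) := by gcongr; linarith
      _ ≤ 4 ^ 6 * ((n * X) * (X ^ 11 * A ^ 2)) :=
        le_mul_of_one_le_left (by positivity) (by norm_num)
      _ = n * (4 * d * X ^ 2) ^ 6 := by rw [← hdA]; ring
  · have hn' : (n : ℝ) ≤ 10 ^ 8 := mod_cast hn
    have hAX : 10 ^ 4 * A ≤ X := by nlinarith
    refine (jacobiLiouville_sq_le_mul_degree (by linarith) (by linarith) hθ).trans ?_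
    nlinarith

theorem jacobiWeight_mul_jacobiP_sq_le {x X : ℝ} (hB : 1 ≤ B) (hBA : B ≤ A) (hX : 1 ≤ X)
    (hnX : 10 ^ 12 * A ≤ n * X) (hx : x ∈ Icc (-1) 1) :
    jacobiWeight (A + 1 / 2) (B + 1 / 2) x * jacobiP A B n x ^ 2 ≤
      4 * A ^ (1 / 3 : ℝ) * X ^ 2 := by
  have := jacobiLiouville_sq_le hB hBA hX hnX ⟨arccos_nonneg x, arccos_le_pi x⟩
  rwa [jacobiLiouville_sq, cos_arccos hx.1 hx.2] at this

end SupBound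

/-! ### The `L^p` bound -/

section LpBound

variable {A B X a b p : ℝ} {n : ℕ}

lemma integral_le_of_le_rpow {f : ℝ → ℝ} {b s γ δ : ℝ} (hb : 0 ≤ b) (hs : 0 < s) (hsγ : s < γ)
    (hδ : 0 < δ) (hf : IntervalIntegrable f volume 0 b)
    (hf_le : ∀ u ∈ Ioo 0 b, f u ≤ u ^ (s - 1))
    (hf_le' : ∀ u ∈ Ioo 0 b, f u ≤ δ ^ γ * u ^ (s - 1 - γ)) :
    ∫ u in 0..b, f u ≤ δ ^ s * (1 / s + 1 / (γ - s)) := by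
  have hhead : ∀ c, 0 ≤ c → c ≤ b → ∫ u in 0..c, f u ≤ c ^ s / s := fun c hc hcb => by
    have hmono := intervalIntegral.integral_mono_on_of_le_Ioo hc
      (hf.mono_set (uIcc_subset_uIcc_left (by rw [uIcc_of_le hb]; exact ⟨hc, hcb⟩)))
      (intervalIntegral.intervalIntegrable_rpow' (by linarith))
      (fun u hu => hf_le u ⟨hu.1, hu.2.trans_le hcb⟩)
    rwa [integral_rpow (Or.inl (by linarith)), sub_add_cancel, zero_rpow hs.ne', sub_zero] at hmono
  rcases le_total b δ with hbδ | hδb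
  · calc ∫ u in 0..b, f u ≤ b ^ s / s := hhead b hb le_rfl
      _ ≤ δ ^ s / s := by gcongr
      _ = δ ^ s * (1 / s) := by ring
      _ ≤ δ ^ s * (1 / s + 1 / (γ - s)) := by
        gcongr
        exact le_add_of_nonneg_right (by positivity)
  have hδ_mem : δ ∈ uIcc 0 b := by rw [uIcc_of_le hb]; exact ⟨hδ.le, hδb⟩
  have hzero : (0 : ℝ) ∉ uIcc δ b := by rw [uIcc_of_le hδb]; exact fun h => hδ.not_ge h.1
  have htail : ∫ u in δ..b, f u ≤ δ ^ s / (γ - s) := by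
    refine (intervalIntegral.integral_mono_on_of_le_Ioo hδb
      (hf.mono_set (uIcc_subset_uIcc_right hδ_mem))
      ((intervalIntegral.intervalIntegrable_rpow (Or.inr hzero)).const_mul _)
      (fun u hu => hf_le' u ⟨hδ.trans hu.1, hu.2⟩)).trans ?_
    rw [intervalIntegral.integral_const_mul, integral_rpow (Or.inr ⟨by linarith, hzero⟩)]
    calc δ ^ γ * ((b ^ (s - 1 - γ + 1) - δ ^ (s - 1 - γ + 1)) / (s - 1 - γ + 1))
        = (δ ^ γ * δ ^ (s - γ) - δ ^ γ * b ^ (s - γ)) / (γ - s) := by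
          rw [show s - 1 - γ + 1 = s - γ by ring, ← neg_sub γ s, div_neg]
          ring
      _ ≤ δ ^ s / (γ - s) := by
        rw [← rpow_add hδ, add_sub_cancel]
        gcongr
        exact sub_le_self _ (by positivity)
  rw [← intervalIntegral.integral_add_adjacent_intervals
    (hf.mono_set (uIcc_subset_uIcc_left hδ_mem)) (hf.mono_set (uIcc_subset_uIcc_right hδ_mem))]
  linarith [hhead δ hδ.le hδb, mul_add (δ ^ s) (1 / s) (1 / (γ - s)), mul_one_div (δ ^ s) s,
    mul_one_div (δ ^ s) (γ - s)]

lemma integral_rpow_mul_rpow_mul_rpow_le {r : ℝ → ℝ} {k l Y : ℝ} (ha : -1 < a) (hb : 0 ≤ b)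
    (hp : 0 < p) (hk : 0 < k) (hY : 0 < Y) (hlb : l * p ≤ b) (hak : a + 1 < p * k)
    (hr : ContinuousOn r (Icc 0 1)) (hr₀ : ∀ u ∈ Icc 0 1, 0 ≤ r u) (hr₁ : ∀ u ∈ Icc 0 1, r u ≤ 1)
    (hrY : ∀ u ∈ Icc 0 1, r u * u ^ k * (1 - u) ^ l ≤ Y) :
    ∫ u in (0 : ℝ)..1, r u ^ p * (u ^ a * (1 - u) ^ b) ≤
      Y ^ ((a + 1) / k) * (1 / (a + 1) + 1 / (p * k - (a + 1))) := by
  have hδ (y : ℝ) : (Y ^ (1 / k)) ^ y = Y ^ (y / k) := by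
    rw [← rpow_mul hY.le, one_div_mul_eq_div]
  have hint : IntervalIntegrable (fun u => r u ^ p * (u ^ a * (1 - u) ^ b)) volume 0 1 := by
    rw [← uIcc_of_le zero_le_one] at hr
    exact ((intervalIntegral.intervalIntegrable_rpow' ha).mul_continuousOn
      ((continuousOn_const.sub continuousOn_id).rpow_const fun _ _ => Or.inr hb)).continuousOn_mul
      (hr.rpow_const fun _ _ => Or.inr hp.le)
  rw [← hδ]
  refine integral_le_of_le_rpow zero_le_one (by linarith) hak (by positivity)
    hint (fun u hu => ?_) (fun u hu => ?_) <;>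
  have hu₀ := hu.1 <;>
  have hu₁ : 0 < 1 - u := sub_pos.2 hu.2 <;>
  have hru := hr₀ u (Ioo_subset_Icc_self hu)
  · have h₁ : r u ^ p ≤ 1 := rpow_le_one hru (hr₁ u (Ioo_subset_Icc_self hu)) hp.le
    have h₂ : (1 - u) ^ b ≤ 1 := rpow_le_one hu₁.le (by linarith) hb
    calc r u ^ p * (u ^ a * (1 - u) ^ b) ≤ 1 * (u ^ a * 1) := by gcongr
      _ = u ^ (a + 1 - 1) := by rw [one_mul, mul_one, add_sub_cancel_right]
  · calc r u ^ p * (u ^ a * (1 - u) ^ b) ≤ r u ^ p * (u ^ a * (1 - u) ^ (l * p)) := by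
          gcongr 2
          exact rpow_le_rpow_of_exponent_ge hu₁ (by linarith) hlb
      _ = (r u * u ^ k * (1 - u) ^ l) ^ p * u ^ (a - k * p) := by
          rw [mul_rpow (by positivity) (by positivity), mul_rpow hru (by positivity),
            ← rpow_mul hu₀.le, ← rpow_mul hu₁.le, rpow_sub hu₀]
          field_simp
      _ ≤ Y ^ p * u ^ (a - k * p) := by
          gcongr
          exact hrY u (Ioo_subset_Icc_self hu)
      _ = (Y ^ (1 / k)) ^ (p * k) * u ^ (a + 1 - 1 - p * k) := by
          rw [hδ, mul_div_cancel_right₀ p hk.ne']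
          ring_nf

lemma integral_mul_one_sub_rpow_mul_one_add_rpow (f : ℝ → ℝ) (a b : ℝ) :
    ∫ x in (-1 : ℝ)..1, f x * (1 - x) ^ a * (1 + x) ^ b =
      2 ^ (a + b + 1) * ∫ u in (0 : ℝ)..1, f (1 - 2 * u) * (u ^ a * (1 - u) ^ b) := by
  have hsub := intervalIntegral.smul_integral_comp_sub_mul (a := 0) (b := 1)
    (f := fun x : ℝ => f x * (1 - x) ^ a * (1 + x) ^ b) 2 1
  rw [mul_zero, mul_one, sub_zero, (by norm_num : (1 : ℝ) - 2 = -1)] at hsub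
  rw [← hsub, smul_eq_mul, rpow_add_one two_ne_zero, mul_comm _ (2 : ℝ), mul_assoc,
    ← intervalIntegral.integral_const_mul (2 ^ (a + b))]
  congr 1
  refine intervalIntegral.integral_congr fun u hu => ?_
  rw [uIcc_of_le zero_le_one] at hu
  have h₁ : 1 - (1 - 2 * u) = 2 * u := by ring
  have h₂ : 1 + (1 - 2 * u) = 2 * (1 - u) := by ring
  rw [h₁, h₂, mul_rpow zero_le_two hu.1, mul_rpow zero_le_two (sub_nonneg.2 hu.2),
    rpow_add two_pos]
  ring

/-- The quantity `A^{1/6} / (2^{(A+B-1)/2} p_n^{(A,B)}(1))`, which governs the decay of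
`p_n^{(A,B)} / p_n^{(A,B)}(1)` away from `x = 1`. -/
def jacobiDecayScale (A B : ℝ) (n : ℕ) : ℝ :=
  A ^ (1 / 6 : ℝ) / (2 ^ ((A + B - 1) / 2) * jacobiP A B n 1)

lemma jacobiP_one_pos (hA : 0 ≤ A) (hB : 0 ≤ B) (n : ℕ) : 0 < jacobiP A B n 1 := by
  rw [jacobiP_eq_normalization_mul]
  exact mul_pos (jacobiNormalization_pos hA hB n) (eval_one_jacobiPoly_pos hA hB n)

lemma continuous_jacobiP (A B : ℝ) (n : ℕ) : Continuous (jacobiP A B n) := by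
  unfold jacobiP
  fun_prop

lemma abs_jacobiP_div_le_one {x : ℝ} (hB : 0 ≤ B) (hBA : B ≤ A) (n : ℕ) (hx : x ∈ Icc (-1) 1) :
    |jacobiP A B n x / jacobiP A B n 1| ≤ 1 := by
  have hA := hB.trans hBA
  rw [jacobiP_eq_normalization_mul, jacobiP_eq_normalization_mul,
    mul_div_mul_left _ _ (jacobiNormalization_pos hA hB n).ne', abs_div,
    abs_of_pos (eval_one_jacobiPoly_pos hA hB n)]
  exact div_le_one_of_le₀ (abs_eval_jacobiPoly_le hB hBA n hx)
    (eval_one_jacobiPoly_pos hA hB n).le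

lemma jacobiDecayScale_pos (hA : 0 < A) (hB : 0 ≤ B) (n : ℕ) : 0 < jacobiDecayScale A B n := by
  have := jacobiP_one_pos hA.le hB n
  unfold jacobiDecayScale
  positivity

lemma rpow_half_sq {y : ℝ} (hy : 0 ≤ y) (e : ℝ) : (y ^ (e / 2)) ^ 2 = y ^ e := by
  rw [← rpow_mul_natCast hy]
  congr 1
  push_cast
  ring

lemma jacobiDecayScale_sq (hA : 0 ≤ A) (B : ℝ) (n : ℕ) :
    jacobiDecayScale A B n ^ 2 = A ^ (1 / 3 : ℝ) / (2 ^ (A + B - 1) * jacobiP A B n 1 ^ 2) := by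
  rw [jacobiDecayScale, div_pow, mul_pow, rpow_half_sq zero_le_two,
    show (1 / 6 : ℝ) = 1 / 3 / 2 by norm_num, rpow_half_sq hA]

lemma jacobiWeight_one_sub_two_mul {u : ℝ} (hu : u ∈ Icc 0 1) (A B : ℝ) :
    jacobiWeight (A + 1 / 2) (B + 1 / 2) (1 - 2 * u) =
      4 * 2 ^ (A + B - 1) * (u ^ (A + 1 / 2) * (1 - u) ^ (B + 1 / 2)) := by
  have h₁ : 1 - (1 - 2 * u) = 2 * u := by ring
  have h₂ : 1 + (1 - 2 * u) = 2 * (1 - u) := by ring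
  have h₃ : (4 : ℝ) * 2 ^ (A + B - 1) = 2 ^ (A + 1 / 2) * 2 ^ (B + 1 / 2) := by
    rw [← rpow_add two_pos, show A + 1 / 2 + (B + 1 / 2) = A + B - 1 + (2 : ℕ) by push_cast; ring,
      rpow_add_natCast two_ne_zero]
    ring
  rw [jacobiWeight, h₁, h₂, h₃, mul_rpow zero_le_two hu.1,
    mul_rpow zero_le_two (sub_nonneg.2 hu.2)]
  ring

lemma abs_jacobiP_div_mul_rpow_le {u : ℝ} (hB : 1 ≤ B) (hBA : B ≤ A) (hX : 1 ≤ X)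
    (hnX : 10 ^ 12 * A ≤ n * X) (hu : u ∈ Icc 0 1) :
    |jacobiP A B n (1 - 2 * u) / jacobiP A B n 1| * u ^ ((A + 1 / 2) / 2) *
      (1 - u) ^ ((B + 1 / 2) / 2) ≤ X * jacobiDecayScale A B n := by
  have hu₁ : 0 ≤ 1 - u := sub_nonneg.2 hu.2
  have hA : 0 < A := by linarith
  have hP := jacobiP_one_pos hA.le (by linarith : 0 ≤ B) n
  have hT := jacobiDecayScale_pos hA (by linarith : 0 ≤ B) n
  have hsup := jacobiWeight_mul_jacobiP_sq_le hB hBA hX hnX (x := 1 - 2 * u)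
    ⟨by linarith [hu.2], by linarith [hu.1]⟩
  rw [jacobiWeight_one_sub_two_mul hu] at hsup
  refine le_of_pow_le_pow_left₀ two_ne_zero (by positivity) ?_
  rw [mul_pow, mul_pow, sq_abs, rpow_half_sq hu.1, rpow_half_sq hu₁, mul_pow,
    jacobiDecayScale_sq hA.le, mul_div_assoc', le_div_iff₀ (by positivity), div_pow]
  have hcancel := div_mul_cancel₀ (jacobiP A B n (1 - 2 * u) ^ 2) (pow_pos hP 2).ne'
  linear_combination hsup / 4 +
    u ^ (A + 1 / 2) * (1 - u) ^ (B + 1 / 2) * 2 ^ (A + B - 1) * hcancel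

lemma integral_abs_jacobiP_div_rpow_le (hB : 1 ≤ B) (hBA : B ≤ A) (hX : 1 ≤ X)
    (hnX : 10 ^ 12 * A ≤ n * X) (ha : -1 < a) (hb : 0 ≤ b) (hp : 0 < p)
    (hpb : p * B + p / 2 ≤ 2 * b) (hpa : 2 * a + 2 < p * A + p / 2) :
    ∫ x in (-1 : ℝ)..1, |jacobiP A B n x / jacobiP A B n 1| ^ p * (1 - x) ^ a * (1 + x) ^ b ≤
      2 ^ (a + b + 1) * ((X * jacobiDecayScale A B n) ^ ((2 * a + 2) / (A + 1 / 2)) *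
        (2 / (2 * a + 2) * (1 + (2 * a + 2) / (p * (A + 1 / 2) - 2 * a - 2)))) := by
  have hT := jacobiDecayScale_pos (by linarith : 0 < A) (by linarith : 0 ≤ B) n
  have hx {u : ℝ} (hu : u ∈ Icc 0 1) : 1 - 2 * u ∈ Icc (-1) 1 :=
    ⟨by linarith [hu.2], by linarith [hu.1]⟩
  have hcont := continuous_jacobiP A B n
  have hmain := integral_rpow_mul_rpow_mul_rpow_le ha hb hp
    (by linarith : 0 < (A + 1 / 2) / 2) (by positivity : 0 < X * jacobiDecayScale A B n)
    (by linarith : (B + 1 / 2) / 2 * p ≤ b) (by linarith)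
    (r := fun u => |jacobiP A B n (1 - 2 * u) / jacobiP A B n 1|)
    (Continuous.continuousOn (by fun_prop)) (fun _ _ => abs_nonneg _)
    (fun u hu => abs_jacobiP_div_le_one (by linarith) hBA n (hx hu))
    (fun u hu => abs_jacobiP_div_mul_rpow_le hB hBA hX hnX hu)
  have hexp : (2 * a + 2) / (A + 1 / 2) = (a + 1) / ((A + 1 / 2) / 2) := by field_simp
  have hd : p * (A + 1 / 2) - 2 * a - 2 = 2 * (p * ((A + 1 / 2) / 2) - (a + 1)) := by ring
  have ha₀ : 0 < a + 1 := by linarith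
  rw [integral_mul_one_sub_rpow_mul_one_add_rpow
    (fun x => |jacobiP A B n x / jacobiP A B n 1| ^ p), hexp, hd]
  refine (mul_le_mul_of_nonneg_left hmain (by positivity)).trans_eq ?_
  congr 2
  field_simp

/-- With `t = R / (1 + R)`, the quotient `(1 + R) / R ^ t` is the exponential of the binary entropy
of `t`. -/
lemma one_add_le_two_mul_rpow {R : ℝ} (hR : 0 < R) : 1 + R ≤ 2 * R ^ (R / (1 + R)) := by
  have hent := binEntropy_le_log_two (p := R / (1 + R))
  have h₁ : 1 - R / (1 + R) = (1 + R)⁻¹ := by field_simp; ring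
  rw [binEntropy, h₁, inv_inv, inv_div, log_div (by positivity) hR.ne'] at hent
  rw [← log_le_log_iff (by positivity) (by positivity), log_mul two_ne_zero (by positivity),
    log_rpow hR]
  have h₂ : R / (1 + R) * (log (1 + R) - log R) + (1 + R)⁻¹ * log (1 + R) =
      log (1 + R) - R / (1 + R) * log R := by
    field_simp
    ring
  linarith

lemma max_one_rpow_neg_inv_rpow_le {R p : ℝ} (hR : 0 < R) (hp : 0 < p) :
    max 1 (R ^ (-(1 / p))) ^ (p * (R / (1 + R))) ≤ 2 := by
  rcases max_choice 1 (R ^ (-(1 / p))) with h | h <;> rw [h]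
  · rw [one_rpow]
    exact one_le_two
  · have hexp : -(1 / p) * (p * (R / (1 + R))) = -(R / (1 + R)) := by field_simp
    rw [← rpow_mul hR.le, hexp, rpow_neg hR.le]
    exact inv_le_of_inv_le₀ two_pos (by linarith [one_add_le_two_mul_rpow hR])

theorem jacobi_lp_integral_bound_general :
    ∃ c₀ c : ℝ, 0 < c₀ ∧ 0 < c ∧
      ∀ (a b A B p : ℝ) (n : ℕ), -1 < a → 1 ≤ B → B ≤ A → 0 < p →
        p * B + p / 2 ≤ 2 * b → 2 * a + 2 < p * A + p / 2 →
        c₀ * A * ((2 * a + 2) / (p * (A + 1/2) - 2 * a - 2)) ^ (1 / p) ≤ (n : ℝ) →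
        (∫ x in (-1 : ℝ)..1,
            |jacobiP A B n x / jacobiP A B n 1| ^ p * (1 - x) ^ a * (1 + x) ^ b) ≤
          c * (2 ^ (a + b) / (2 * a + 2)) *
            (A ^ ((1 : ℝ)/6) / (2 ^ ((A + B - 1) / 2) * jacobiP A B n 1)) ^
              ((2 * a + 2) / (A + 1/2)) *
            ((2 * a + 2) / (p * (A + 1/2) - 2 * a - 2)) ^
              ((2 * a + 2) / (p * (A + 1/2))) := by
  refine ⟨10 ^ 12, 16, by norm_num, by norm_num,
    fun a b A B p n ha hB hBA hp hpb hpa hn => ?_⟩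
  have hb : 0 ≤ b := by nlinarith
  have hd : 0 < p * (A + 1 / 2) - 2 * a - 2 := by linarith
  set R := (2 * a + 2) / (p * (A + 1 / 2) - 2 * a - 2) with hR_def
  have hR : 0 < R := div_pos (by linarith) hd
  have ht : (2 * a + 2) / (p * (A + 1 / 2)) = R / (1 + R) := by
    rw [hR_def, one_add_div hd.ne', div_div_div_cancel_right₀ hd.ne']
    ring
  have ht' : (2 * a + 2) / (A + 1 / 2) = p * (R / (1 + R)) := by rw [← ht]; field_simp
  have hnX : 10 ^ 12 * A ≤ n * max 1 (R ^ (-(1 / p))) := by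
    refine le_trans ?_ (mul_le_mul_of_nonneg_left (le_max_right _ _) n.cast_nonneg)
    rwa [rpow_neg hR.le, ← div_eq_mul_inv, le_div_iff₀ (by positivity)]
  have hT := jacobiDecayScale_pos (by linarith : 0 < A) (by linarith : 0 ≤ B) n
  refine (integral_abs_jacobiP_div_rpow_le hB hBA (le_max_left 1 (R ^ (-(1 / p)))) hnX
    ha hb hp hpb hpa).trans ?_
  rw [← hR_def, mul_rpow (by positivity) hT.le, ht, ht', rpow_add_one two_ne_zero]
  calc _ ≤ 2 ^ (a + b) * 2 * (2 * jacobiDecayScale A B n ^ (p * (R / (1 + R))) *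
        (2 / (2 * a + 2) * (2 * R ^ (R / (1 + R))))) := by
        have : 0 < 2 * a + 2 := by linarith
        gcongr
        exacts [max_one_rpow_neg_inv_rpow_le hR hp, one_add_le_two_mul_rpow hR]
    _ = _ := by
        rw [jacobiDecayScale]
        ring

end LpBound

/-- Weighted `L^p` bound for the normalized Jacobi polynomial `p_n^{(A,B)}/p_n^{(A,B)}(1)`. -/
theorem jacobi_lp_integral_bound :
    ∃ c₀ c : ℝ, 0 < c₀ ∧ 0 < c ∧
      ∀ (a b A B p : ℝ) (n : ℕ), 0 ≤ b → b ≤ a → 1 ≤ B → B ≤ A → 0 < p →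
        p * B + p / 2 ≤ 2 * b → 2 * a + 2 < p * A + p / 2 →
        c₀ * A * ((2 * a + 2) / (p * (A + 1/2) - 2 * a - 2)) ^ (1 / p) ≤ (n : ℝ) →
        (∫ x in (-1 : ℝ)..1,
            |jacobiP A B n x / jacobiP A B n 1| ^ p * (1 - x) ^ a * (1 + x) ^ b) ≤
          c * (2 ^ (a + b) / (2 * a + 2)) *
            (A ^ ((1 : ℝ)/6) / (2 ^ ((A + B - 1) / 2) * jacobiP A B n 1)) ^
              ((2 * a + 2) / (A + 1/2)) *
            ((2 * a + 2) / (p * (A + 1/2) - 2 * a - 2)) ^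
              ((2 * a + 2) / (p * (A + 1/2))) := by
  obtain ⟨c₀, c, hc₀, hc, h⟩ := jacobi_lp_integral_bound_general
  exact ⟨c₀, c, hc₀, hc, fun a b A B p n hb hba => h a b A B p n (by linarith)⟩

end
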